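/- Every 6-dimensional finite-volume right-angled convex hyperbolic polyhedron has at least 27 facets: a₅(P) ≥ 27. -/

import Mathlib

open scoped BigOperators

noncomputable section

/-- The Minkowski bilinear form `⟨x,y⟩ = -x₀y₀ + x₁y₁ + ⋯ + xₙyₙ` on `ℝ^{n+1}`. -/
def mink {n : ℕ} (x y : Fin (n + 1) → ℝ) : ℝ :=
  -(x 0 * y 0) + ∑ i : Fin n, x i.succ * y i.succ

/-- The hyperboloid model of the hyperbolic space `ℍⁿ`. -/
def Hyperboloid (n : ℕ) : Set (Fin (n + 1) → ℝ) :=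
  {x | mink x x = -1 ∧ 0 < x 0}

/-- The Klein projection `x ↦ (x₁/x₀, …, xₙ/x₀)` of the hyperboloid onto the unit ball. -/
def kleinMap {n : ℕ} (x : Fin (n + 1) → ℝ) : EuclideanSpace ℝ (Fin n) :=
  WithLp.toLp 2 fun i => x i.succ / x 0

/-- Dimension of a subset of a real vector space: the rank of its vector span. -/
def sdim {n : ℕ} (s : Set (EuclideanSpace ℝ (Fin n))) : ℕ :=
  Module.finrank ℝ (vectorSpan ℝ s)

/-- A convex hyperbolic `n`-polyhedron: a finite intersection of hyperbolic half-spaces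
`H_{eᵢ}⁻ = {x : ⟨eᵢ,x⟩ ≤ 0}` (with `⟨eᵢ,eᵢ⟩ = 1`) having nonempty interior
(equivalently, its Klein-model image has nonempty interior in `ℝⁿ`). -/
structure HypPolyhedron (n : ℕ) where
  m : ℕ
  e : Fin m → (Fin (n + 1) → ℝ)
  unit : ∀ i, mink (e i) (e i) = 1
  nonempty_int :
    (interior (kleinMap '' {x ∈ Hyperboloid n | ∀ i, mink (e i) x ≤ 0})).Nonempty

namespace HypPolyhedron

variable {n : ℕ} (P : HypPolyhedron n)

/-- The set of points of the polyhedron in the hyperboloid model. -/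
def carrier : Set (Fin (n + 1) → ℝ) :=
  {x ∈ Hyperboloid n | ∀ i, mink (P.e i) x ≤ 0}

/-- `P̄`: the closure of the Klein-model image of the polyhedron in the closed unit ball. -/
def cl : Set (EuclideanSpace ℝ (Fin n)) :=
  closure (kleinMap '' P.carrier)

/-- The `k`-faces of `P`: the `k`-dimensional (nonempty) exposed faces of `P̄`. -/
def faces (k : ℕ) : Set (Set (EuclideanSpace ℝ (Fin n))) :=
  {F | IsExposed ℝ P.cl F ∧ F.Nonempty ∧ sdim F = k}

/-- `a_k(P)`: the number of `k`-faces of `P`. -/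
def a (k : ℕ) : ℕ := (P.faces k).ncard

/-- Vertices of `P`: the points of `0`-dimensional exposed faces of `P̄`. -/
def verts : Set (EuclideanSpace ℝ (Fin n)) :=
  {v | IsExposed ℝ P.cl {v}}

/-- Ideal vertices: vertices lying on the unit sphere. -/
def idealVerts : Set (EuclideanSpace ℝ (Fin n)) :=
  {v ∈ P.verts | ‖v‖ = 1}

/-- Finite vertices: vertices lying in the open unit ball. -/
def finiteVerts : Set (EuclideanSpace ℝ (Fin n)) :=
  {v ∈ P.verts | ‖v‖ < 1}

/-- `v_∞(P)`: the number of ideal vertices of `P`. -/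
def vInf : ℕ := P.idealVerts.ncard

/-- The bounding hyperplane `H_e` contains the face `F`. -/
def faceInHyperplane (e : Fin (n + 1) → ℝ) (F : Set (EuclideanSpace ℝ (Fin n))) : Prop :=
  ∀ x ∈ P.carrier, kleinMap x ∈ F → mink e x = 0

/-- `P` is right-angled: whenever two distinct bounding hyperplanes both contain an
`(n-2)`-dimensional face of `P`, the corresponding unit normals are orthogonal,
i.e. the dihedral angle is `π/2`. -/
def IsRightAngled : Prop :=
  ∀ i j : Fin P.m, i ≠ j →
    (∃ F ∈ P.faces (n - 2), P.faceInHyperplane (P.e i) F ∧ P.faceInHyperplane (P.e j) F) →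
    mink (P.e i) (P.e j) = 0

/-- `P` has finite volume: `P̄` is the convex hull of its (finitely many) vertices. -/
def FiniteVolume : Prop :=
  P.verts.Finite ∧ P.cl = convexHull ℝ P.verts

/-- `P` is compact: finite volume and all vertices are finite. -/
def IsCompactPoly : Prop :=
  P.FiniteVolume ∧ ∀ v ∈ P.verts, ‖v‖ < 1

/-- `P` is ideal: finite volume and all vertices are ideal. -/
def IsIdeal : Prop :=
  P.FiniteVolume ∧ ∀ v ∈ P.verts, ‖v‖ = 1

end HypPolyhedron

/-- `ν(P) = a_{n-1}(P) + v_∞(P)` ranging over the family `𝒫ⁿ` of finite-volume non-compact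
right-angled convex hyperbolic `n`-polyhedra. -/
def nuSet (n : ℕ) : Set ℕ :=
  {m | ∃ P : HypPolyhedron n,
        P.FiniteVolume ∧ P.IsRightAngled ∧ ¬ P.IsCompactPoly ∧ P.a (n - 1) + P.vInf = m}

/-- `νₙ = sInf {ν(P) : P ∈ 𝒫ⁿ}` (with `sInf ∅ = 0`). -/
def nu (n : ℕ) : ℕ := sInf (nuSet n)

/-!
The normals of the facets of a right-angled polyhedron satisfy `⟨eᵢ, eⱼ⟩ = 0` or `⟨eᵢ, eⱼ⟩ ≤ -1`,
and its faces correspond to the cliques of pairwise orthogonal normals. Only ideal vertices escape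
this description; their links are Euclidean boxes, so that the facets through an ideal vertex come
in opposite pairs with `⟨eᵢ, eⱼ⟩ = -1`.

Let `fₖ` be the number of `k`-faces of a face, finite vertices only, and `v` the number of its ideal
vertices. Sweeping with a generic height function gives the Euler relation
`∑ₖ (-1)ᵏ fₖ = 1 - v`. A right-angled polygon has `f₀ + 2 v ≥ 5`. In a `5`-dimensional face,
summing the polygon bound over the `2`-faces and the Euler relation over the faces of dimension `1`
and `3`, and comparing with the Euler relation of the face itself, one finds `5 f₄ ≤ 7 v + 10`.

On the other hand, let `F` be a facet of some face. Besides `F` itself that face has the facets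
adjacent to `F`, as many as `F` has facets, and at each ideal vertex of `F` the facet opposite
to `F`. All these are distinct. Climbing up through the dimensions in this way one gets `f₄ ≥ 16` in
dimension `5`, hence `v ≥ 10` and `f₄ + v ≥ 26`, and finally `1 + 26` facets in dimension `6`.
-/

/-- The Minkowski space `ℝ^{n+1}` containing the hyperboloid model of `ℍⁿ`. -/
abbrev MinkowskiSpace (n : ℕ) : Type := Fin (n + 1) → ℝ

/-! ### The Minkowski form -/

section Minkowski

variable {n : ℕ} {u v x y z : MinkowskiSpace n}

/-- The space-like coordinates `(x₁, …, xₙ)` of a vector of Minkowski space. -/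
def spatial : MinkowskiSpace n →ₗ[ℝ] EuclideanSpace ℝ (Fin n) where
  toFun x := WithLp.toLp 2 fun i => x i.succ
  map_add' _ _ := rfl
  map_smul' _ _ := rfl

@[simp]
theorem spatial_apply (x : MinkowskiSpace n) (i : Fin n) : spatial x i = x i.succ := rfl

theorem ext_spatial (h₀ : x 0 = y 0) (h : spatial x = spatial y) : x = y := by
  funext i
  refine Fin.cases h₀ (fun j => ?_) i
  exact congrFun (congrArg WithLp.ofLp h) j

theorem mink_eq_inner (x y : MinkowskiSpace n) :
    mink x y = inner ℝ (spatial x) (spatial y) - x 0 * y 0 := by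
  simp only [mink, PiLp.inner_apply, RCLike.inner_apply, conj_trivial, spatial_apply,
    mul_comm (y (Fin.succ _))]
  ring

theorem mink_self_eq (x : MinkowskiSpace n) : mink x x = ‖spatial x‖ ^ 2 - x 0 ^ 2 := by
  rw [mink_eq_inner, real_inner_self_eq_norm_sq, pow_two (x 0)]

theorem mink_comm (x y : MinkowskiSpace n) : mink x y = mink y x := by
  simp only [mink, mul_comm]

theorem mink_add_right (x y z : MinkowskiSpace n) : mink x (y + z) = mink x y + mink x z := by
  simp only [mink_eq_inner, map_add, inner_add_right, Pi.add_apply]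
  ring

theorem mink_smul_right (c : ℝ) (x y : MinkowskiSpace n) : mink x (c • y) = c * mink x y := by
  simp only [mink_eq_inner, map_smul, inner_smul_right, Pi.smul_apply, smul_eq_mul]
  ring

theorem mink_add_left (x y z : MinkowskiSpace n) : mink (x + y) z = mink x z + mink y z := by
  simp only [mink_comm _ z, mink_add_right]

theorem mink_smul_left (c : ℝ) (x y : MinkowskiSpace n) : mink (c • x) y = c * mink x y := by
  simp only [mink_comm _ y, mink_smul_right]

/-- The Minkowski form as a bilinear form. -/
def minkForm (n : ℕ) : LinearMap.BilinForm ℝ (MinkowskiSpace n) :=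
  LinearMap.mk₂ ℝ mink mink_add_left mink_smul_left mink_add_right mink_smul_right

theorem mink_neg_right (x y : MinkowskiSpace n) : mink x (-y) = -mink x y :=
  map_neg (minkForm n x) y

theorem mink_sub_right (x y z : MinkowskiSpace n) : mink x (y - z) = mink x y - mink x z :=
  map_sub (minkForm n x) y z

theorem mink_sub_left (x y z : MinkowskiSpace n) : mink (x - y) z = mink x z - mink y z := by
  simp only [mink_comm _ z, mink_sub_right]

theorem mink_zero_left (x : MinkowskiSpace n) : mink 0 x = 0 :=
  LinearMap.map_zero₂ (minkForm n) x

theorem mink_sum_right {κ : Type*} (s : Finset κ) (x : MinkowskiSpace n)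
    (f : κ → MinkowskiSpace n) : mink x (∑ k ∈ s, f k) = ∑ k ∈ s, mink x (f k) :=
  map_sum (minkForm n x) f s

theorem continuous_mink_right (x : MinkowskiSpace n) : Continuous (mink x) := by
  unfold mink
  fun_prop

theorem mink_add_smul_self (t : ℝ) (x y : MinkowskiSpace n) :
    mink (x + t • y) (x + t • y) = mink x x + 2 * t * mink x y + t ^ 2 * mink y y := by
  simp only [mink_add_left, mink_add_right, mink_smul_left, mink_smul_right, mink_comm y x]
  ring

theorem ne_zero_of_mink_self_ne_zero (hx : mink x x ≠ 0) : x ≠ 0 := by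
  rintro rfl
  exact hx (mink_zero_left 0)

theorem mink_self_nonneg_of_coord_zero (hx : x 0 = 0) : 0 ≤ mink x x := by
  rw [mink_self_eq, hx]
  simp

theorem eq_zero_of_causal_of_coord_zero (hx : mink x x ≤ 0) (hx₀ : x 0 = 0) : x = 0 := by
  refine ext_spatial hx₀ ?_
  rw [mink_self_eq, hx₀] at hx
  rw [map_zero, ← norm_eq_zero]
  nlinarith [sq_nonneg ‖spatial x‖]

theorem exists_mink_sub_smul_self (hv : mink v v ≤ 0) (hv₀ : v ≠ 0) (huv : mink u v = 0) :
    ∃ c : ℝ, (u - c • v) 0 = 0 ∧ mink (u - c • v) (u - c • v) = mink u u + c ^ 2 * mink v v := by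
  have hv₀' : v 0 ≠ 0 := fun h => hv₀ (eq_zero_of_causal_of_coord_zero hv h)
  refine ⟨u 0 / v 0, ?_, ?_⟩
  · rw [Pi.sub_apply, Pi.smul_apply, smul_eq_mul, div_mul_cancel₀ _ hv₀', sub_self]
  · rw [sub_eq_add_neg, ← neg_smul, mink_add_smul_self, huv]
    ring

theorem mink_self_nonneg_of_orthogonal (hv : mink v v ≤ 0) (hv₀ : v ≠ 0) (huv : mink u v = 0) :
    0 ≤ mink u u := by
  obtain ⟨c, hc₀, hc⟩ := exists_mink_sub_smul_self hv hv₀ huv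
  have := mink_self_nonneg_of_coord_zero hc₀
  nlinarith [sq_nonneg c]

theorem exists_eq_smul_of_orthogonal (hv : mink v v ≤ 0) (hv₀ : v ≠ 0) (huv : mink u v = 0)
    (hu : mink u u ≤ 0) : ∃ c : ℝ, u = c • v := by
  obtain ⟨c, hc₀, hc⟩ := exists_mink_sub_smul_self hv hv₀ huv
  have hle : mink (u - c • v) (u - c • v) ≤ 0 := by nlinarith [sq_nonneg c]
  exact ⟨c, sub_eq_zero.mp (eq_zero_of_causal_of_coord_zero hle hc₀)⟩

theorem mink_self_pos_of_orthogonal (hv : mink v v < 0) (hu₀ : u ≠ 0) (huv : mink u v = 0) :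
    0 < mink u u := by
  by_contra! hu
  obtain ⟨c, rfl⟩ :=
    exists_eq_smul_of_orthogonal hv.le (ne_zero_of_mink_self_ne_zero hv.ne) huv hu
  rw [mink_smul_left] at huv
  exact hu₀ (by rw [(mul_eq_zero.mp huv).resolve_right hv.ne, zero_smul])

theorem norm_spatial_le_of_causal (hx : mink x x ≤ 0) (hx₀ : 0 ≤ x 0) : ‖spatial x‖ ≤ x 0 :=
  le_of_sq_le_sq (by linarith [mink_self_eq x]) hx₀

theorem mink_nonpos_of_causal (hu : mink u u ≤ 0) (hv : mink v v ≤ 0) (hu₀ : 0 ≤ u 0)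
    (hv₀ : 0 ≤ v 0) : mink u v ≤ 0 := by
  rw [mink_eq_inner, sub_nonpos]
  calc inner ℝ (spatial u) (spatial v) ≤ ‖spatial u‖ * ‖spatial v‖ := real_inner_le_norm _ _
    _ ≤ u 0 * v 0 := by gcongr <;> apply norm_spatial_le_of_causal <;> assumption

theorem mink_neg_of_timelike_of_null (hu : mink u u < 0) (hv : mink v v = 0) (hu₀ : 0 ≤ u 0)
    (hv₀ : 0 < v 0) : mink u v < 0 := by
  refine (mink_nonpos_of_causal hu.le hv.le hu₀ hv₀.le).lt_of_ne fun huv => ?_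
  have hv_ne : v ≠ 0 := by
    rintro rfl
    exact hv₀.ne rfl
  exact (mink_self_pos_of_orthogonal hu hv_ne (by rwa [mink_comm])).ne' hv

end Minkowski

/-! ### Systems of linear inequalities -/

section LinearInequalities

open Filter Topology

variable {κ E : Type*} [AddCommGroup E] [Module ℝ E] {f : κ → Module.Dual ℝ E}
  {W : Submodule ℝ E} {J s : Finset κ} {k : κ} {u x z : E}

theorem eventually_forall_apply_add_smul_nonpos (hx : ∀ k ∈ s, f k x ≤ 0)
    (hu : ∀ k ∈ s, f k x = 0 → f k u ≤ 0) :
    ∀ᶠ t : ℝ in 𝓝[>] 0, ∀ k ∈ s, f k (x + t • u) ≤ 0 := by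
  refine (eventually_all_finset s).mpr fun k hk => ?_
  simp only [map_add, map_smul, smul_eq_mul]
  rcases (hx k hk).lt_or_eq with hlt | heq
  · have hcont : Continuous fun t : ℝ => f k x + t * f k u := by fun_prop
    have hlim := hcont.tendsto 0
    rw [zero_mul, add_zero] at hlim
    exact (hlim.eventually_le_const hlt).filter_mono nhdsWithin_le_nhds
  · filter_upwards [self_mem_nhdsWithin] with t ht
    rw [heq, zero_add]
    exact mul_nonpos_of_nonneg_of_nonpos (le_of_lt ht) (hu k hk heq)

/-- Among the inequalities `f j z ≤ 0` with `j ∈ J`, only the one with `j = k` is an equality. -/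
def TightOnlyAt (f : κ → Module.Dual ℝ E) (J : Finset κ) (k : κ) (z : E) : Prop :=
  f k z = 0 ∧ ∀ j ∈ J, j ≠ k → f j z < 0

theorem TightOnlyAt.nonpos (h : TightOnlyAt f J k z) : ∀ j ∈ J, f j z ≤ 0 := by
  intro j hj
  rcases eq_or_ne j k with rfl | hjk
  · exact h.1.le
  · exact (h.2 j hj hjk).le

theorem TightOnlyAt.exists_add_smul_nonpos (h : TightOnlyAt f J k z) (hu : f k u = 0) :
    ∃ t : ℝ, 0 < t ∧ ∀ j ∈ J, f j (z + t • u) ≤ 0 := by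
  refine (eventually_mem_nhdsWithin.and
    (eventually_forall_apply_add_smul_nonpos h.nonpos fun j hj hjz => ?_)).exists
  rcases eq_or_ne j k with rfl | hjk
  · exact hu.le
  · exact absurd hjz (h.2 j hj hjk).ne

/-- On the subspace `W` the inequalities indexed by `J` imply all those indexed by `s`, and none of
them follows from the others. -/
structure IsIrredundantSubsystem (f : κ → Module.Dual ℝ E) (W : Submodule ℝ E) (s J : Finset κ) :
    Prop where
  subset : J ⊆ s
  forall_nonpos : ∀ x ∈ W, (∀ k ∈ J, f k x ≤ 0) → ∀ k ∈ s, f k x ≤ 0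
  exists_tightOnlyAt : ∀ k ∈ J, ∃ z ∈ W, TightOnlyAt f J k z

theorem exists_isIrredundantSubsystem {p : E} (hpW : p ∈ W) (hp : ∀ k ∈ s, f k p < 0) :
    ∃ J, IsIrredundantSubsystem f W s J := by
  classical
  obtain ⟨J, hJ, hmin⟩ := Finset.exists_min_image
    {J ∈ s.powerset | ∀ x ∈ W, (∀ k ∈ J, f k x ≤ 0) → ∀ k ∈ s, f k x ≤ 0}
    Finset.card ⟨s, Finset.mem_filter.mpr ⟨Finset.mem_powerset_self s, fun _ _ h => h⟩⟩
  obtain ⟨hJs, hJ⟩ := Finset.mem_filter.mp hJ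
  rw [Finset.mem_powerset] at hJs
  refine ⟨J, hJs, hJ, fun k hk => ?_⟩
  have herase : ¬∀ x ∈ W, (∀ j ∈ J.erase k, f j x ≤ 0) → ∀ j ∈ s, f j x ≤ 0 := fun h =>
    (Finset.card_erase_lt_of_mem hk).not_ge (hmin _ (Finset.mem_filter.mpr
      ⟨Finset.mem_powerset.mpr ((Finset.erase_subset k J).trans hJs), h⟩))
  push Not at herase
  obtain ⟨x, hxW, hx, i, hi, hix⟩ := herase
  have hkx : 0 < f k x := by
    by_contra! hkx
    refine hix.not_ge (hJ x hxW (fun j hj => ?_) i hi)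
    rcases eq_or_ne j k with rfl | hjk
    · exact hkx
    · exact hx j (Finset.mem_erase.mpr ⟨hjk, hj⟩)
  have hkp := hp k (hJs hk)
  -- The segment from `p` to `x` meets the hyperplane `f k = 0` in a multiple of this point.
  refine ⟨f k x • p - f k p • x, W.sub_mem (W.smul_mem _ hpW) (W.smul_mem _ hxW), ?_,
    fun j hj hjk => ?_⟩ <;>
    simp only [map_sub, map_smul, smul_eq_mul]
  · ring
  · have hjp := mul_neg_of_pos_of_neg hkx (hp j (hJs hj))
    have hjx := mul_nonneg_of_nonpos_of_nonpos hkp.le (hx j (Finset.mem_erase.mpr ⟨hjk, hj⟩))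
    linarith

theorem finrank_inf_ker_add_one [FiniteDimensional ℝ E] {g : Module.Dual ℝ E} (hz : z ∈ W)
    (hgz : g z ≠ 0) : Module.finrank ℝ ↥(W ⊓ LinearMap.ker g) + 1 = Module.finrank ℝ W := by
  have hne : g.domRestrict W ≠ 0 := fun h => hgz (LinearMap.congr_fun h ⟨z, hz⟩)
  rw [← Module.Dual.finrank_ker_add_one_of_ne_zero hne, ← Submodule.map_comap_subtype,
    Submodule.finrank_map_subtype_eq]
  rfl

end LinearInequalities

/-! ### Right-angled systems of unit normals -/

/-- The combinatorial and metric data of a finite-volume right-angled polyhedron in `ℍⁿ`: the outer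
unit normals of its facets, the finite set of extreme rays of the cone over it, each scaled to have
time coordinate `1`, and an interior point. The value `-1` bounding the Gram matrix separates
intersecting facets from those that are parallel or ultraparallel. -/
structure RightAngledSystem (n : ℕ) (ι : Type*) where
  normal : ι → MinkowskiSpace n
  vertices : Finset (MinkowskiSpace n)
  center : MinkowskiSpace n
  mink_normal_self : ∀ i, mink (normal i) (normal i) = 1
  mink_normal : ∀ i j, i ≠ j → mink (normal i) (normal j) = 0 ∨ mink (normal i) (normal j) ≤ -1
  mink_center_neg : ∀ i, mink (normal i) center < 0
  center_timelike : mink center center < 0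
  causal : ∀ x, (∀ i, mink (normal i) x ≤ 0) → x ≠ 0 → 0 < x 0 ∧ mink x x ≤ 0
  vertex_zero : ∀ v ∈ vertices, v 0 = 1
  mink_vertex_nonpos : ∀ v ∈ vertices, ∀ i, mink (normal i) v ≤ 0
  exists_eq_sum : ∀ x, (∀ i, mink (normal i) x ≤ 0) →
    ∃ a : MinkowskiSpace n → ℝ, (∀ v, 0 ≤ a v) ∧ x = ∑ v ∈ vertices, a v • v
  extreme : ∀ v ∈ vertices, ∀ u, (∀ i, mink (normal i) (v + u) ≤ 0) →
    (∀ i, mink (normal i) (v - u) ≤ 0) → ∃ c : ℝ, u = c • v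

namespace RightAngledSystem

open scoped Classical

variable {n : ℕ} {ι : Type*} (R : RightAngledSystem n ι)

/-- The linear cone over the polyhedron. -/
def cone : Set (MinkowskiSpace n) := {x | ∀ i, mink (R.normal i) x ≤ 0}

/-- A set of pairwise orthogonal facets. It encodes the face in which these facets intersect, so
that larger sets are smaller faces. -/
def IsFace (S : Finset ι) : Prop :=
  (S : Set ι).Pairwise fun i j => mink (R.normal i) (R.normal j) = 0

/-- The vertices at infinity. -/
def idealVertices : Finset (MinkowskiSpace n) := {v ∈ R.vertices | mink v v = 0}

/-- The linear span of the cone over the face `S`. -/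
def faceSpan (S : Finset ι) : Submodule ℝ (MinkowskiSpace n) :=
  LinearMap.ker (LinearMap.pi fun i : S => minkForm n (R.normal i))

variable {R} {S T : Finset ι} {i j : ι} {x z v : MinkowskiSpace n}

theorem mem_faceSpan : x ∈ R.faceSpan S ↔ ∀ i ∈ S, mink (R.normal i) x = 0 := by
  simp only [faceSpan, LinearMap.mem_ker, funext_iff, LinearMap.pi_apply, Pi.zero_apply,
    Subtype.forall]
  rfl

theorem IsFace.mono (hT : R.IsFace T) (h : S ⊆ T) : R.IsFace S :=
  Set.Pairwise.mono (Finset.coe_subset.mpr h) hT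

theorem IsFace.insert_of_orthogonal (hS : R.IsFace S)
    (hi : ∀ j ∈ S, mink (R.normal j) (R.normal i) = 0) : R.IsFace (insert i S) := by
  rw [IsFace, Finset.coe_insert]
  exact Set.Pairwise.insert hS fun j hj _ => ⟨by rw [mink_comm]; exact hi j hj, hi j hj⟩

theorem isFace_empty : R.IsFace ∅ := by
  rw [IsFace, Finset.coe_empty]
  exact Set.pairwise_empty _

variable (R) in
theorem mink_normal_nonpos (h : i ≠ j) : mink (R.normal i) (R.normal j) ≤ 0 := by
  rcases R.mink_normal i j h with h | h <;> linarith

theorem ne_of_mink_normal_nonpos (h : mink (R.normal i) (R.normal j) ≤ 0) : i ≠ j := by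
  rintro rfl
  linarith [R.mink_normal_self i]

variable (R) in
theorem normal_add_normal_ne_zero (i j : ι) : R.normal i + R.normal j ≠ 0 := by
  intro h
  have h₀ : mink (R.normal i + R.normal j) R.center = 0 := by rw [h, mink_zero_left]
  rw [mink_add_left] at h₀
  linarith [R.mink_center_neg i, R.mink_center_neg j]

variable (R) in
theorem mink_normal_add_normal_self (i j : ι) :
    mink (R.normal i + R.normal j) (R.normal i + R.normal j) =
      2 + 2 * mink (R.normal i) (R.normal j) := by
  simp only [mink_add_left, mink_add_right, R.mink_normal_self,
    mink_comm (R.normal j) (R.normal i)]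
  ring

@[simp]
theorem mem_idealVertices : v ∈ R.idealVertices ↔ v ∈ R.vertices ∧ mink v v = 0 := by
  simp [idealVertices]

theorem vertex_ne_zero (hv : v ∈ R.vertices) : v ≠ 0 := by
  rintro rfl
  exact zero_ne_one (R.vertex_zero _ hv)

theorem vertex_causal (hv : v ∈ R.vertices) : mink v v ≤ 0 :=
  (R.causal v (R.mink_vertex_nonpos v hv) (vertex_ne_zero hv)).2

theorem eq_of_eq_smul_vertex {w : MinkowskiSpace n} {c : ℝ} (hv : v ∈ R.vertices)
    (hw : w ∈ R.vertices) (h : w = c • v) : w = v := by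
  have hc := congrFun h 0
  rw [R.vertex_zero w hw, Pi.smul_apply, R.vertex_zero v hv, smul_eq_mul, mul_one] at hc
  rw [h, ← hc, one_smul]

theorem normal_add_normal_mem_cone (h : mink (R.normal i) (R.normal j) ≤ -1) :
    R.normal i + R.normal j ∈ R.cone := by
  intro k
  rw [mink_add_right]
  obtain rfl | hi := eq_or_ne k i
  · rw [R.mink_normal_self]
    linarith
  obtain rfl | hj := eq_or_ne k j
  · rw [R.mink_normal_self, mink_comm]
    linarith
  exact add_nonpos (R.mink_normal_nonpos hi) (R.mink_normal_nonpos hj)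

theorem normal_add_normal_causal (h : mink (R.normal i) (R.normal j) ≤ -1) :
    mink (R.normal i + R.normal j) (R.normal i + R.normal j) ≤ 0 :=
  (R.causal _ (normal_add_normal_mem_cone h) (R.normal_add_normal_ne_zero i j)).2

/-! ### Projecting to a facet -/

theorem mink_sub_mink_smul_normal (x : MinkowskiSpace n) (i j : ι) :
    mink (R.normal j) (x - mink (R.normal i) x • R.normal i) =
      mink (R.normal j) x - mink (R.normal i) x * mink (R.normal j) (R.normal i) := by
  rw [mink_sub_right, mink_smul_right]

theorem sub_smul_normal_mem_cone (hx : x ∈ R.cone) (i : ι) :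
    x - mink (R.normal i) x • R.normal i ∈ R.cone := by
  intro j
  rw [mink_sub_mink_smul_normal]
  obtain rfl | h := eq_or_ne j i
  · rw [R.mink_normal_self]
    linarith
  · nlinarith [hx i, hx j, R.mink_normal_nonpos h]

theorem sub_smul_normal_mem_faceSpan (hx : x ∈ R.faceSpan S) (hi : R.IsFace (insert i S)) :
    x - mink (R.normal i) x • R.normal i ∈ R.faceSpan (insert i S) := by
  rw [mem_faceSpan] at hx ⊢
  intro j hj
  rw [mink_sub_mink_smul_normal]
  obtain rfl | h := eq_or_ne j i
  · rw [R.mink_normal_self, mul_one, sub_self]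
  · rw [hx j ((Finset.mem_insert.mp hj).resolve_left h),
      hi hj (Finset.mem_insert_self i S) h, mul_zero, sub_zero]

theorem mem_insert_of_mink_sub_smul_normal_eq_zero (hx : x ∈ R.cone)
    (hS : ∀ j, mink (R.normal j) x = 0 → j ∈ S)
    (hj : mink (R.normal j) (x - mink (R.normal i) x • R.normal i) = 0) : j ∈ insert i S := by
  rw [mink_sub_mink_smul_normal] at hj
  refine Finset.mem_insert.mpr (or_iff_not_imp_left.mpr fun hji => hS j ?_)
  nlinarith [hx i, hx j, R.mink_normal_nonpos hji]

theorem exists_timelike (hS : R.IsFace S) :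
    ∃ x ∈ R.cone, mink x x < 0 ∧ ∀ j, mink (R.normal j) x = 0 ↔ j ∈ S := by
  induction S using Finset.induction_on with
  | empty =>
    exact ⟨R.center, fun i => (R.mink_center_neg i).le, R.center_timelike,
      fun i => by simpa using (R.mink_center_neg i).ne⟩
  | insert i S _ ih =>
    obtain ⟨x, hx, hxx, hxS⟩ := ih (hS.mono (Finset.subset_insert _ _))
    refine ⟨x - mink (R.normal i) x • R.normal i, sub_smul_normal_mem_cone hx i, ?_, fun j => ?_⟩
    · simp only [mink_sub_left, mink_sub_right, mink_smul_left, mink_smul_right,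
        R.mink_normal_self, mink_comm x (R.normal i)]
      nlinarith [sq_nonneg (mink (R.normal i) x)]
    · exact ⟨mem_insert_of_mink_sub_smul_normal_eq_zero hx fun j => (hxS j).mp,
        mem_faceSpan.mp (sub_smul_normal_mem_faceSpan
          (mem_faceSpan.mpr fun j => (hxS j).mpr) hS) j⟩

/-! ### The span of a face -/

theorem finrank_faceSpan_add_card (hS : R.IsFace S) :
    Module.finrank ℝ (R.faceSpan S) + S.card = n + 1 := by
  have hsurj : Function.Surjective (LinearMap.pi fun i : S => minkForm n (R.normal i)) := by
    intro c
    refine ⟨∑ i : S, c i • R.normal i, funext fun j => ?_⟩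
    change mink (R.normal j) (∑ i : S, c i • R.normal i) = c j
    rw [mink_sum_right, Finset.sum_eq_single_of_mem j (Finset.mem_univ j),
      mink_smul_right, R.mink_normal_self, mul_one]
    intro i _ hij
    rw [mink_smul_right, hS j.2 i.2 fun h => hij (Subtype.ext h.symm), mul_zero]
  have h := LinearMap.finrank_range_add_finrank_ker
    (LinearMap.pi fun i : S => minkForm n (R.normal i))
  rw [LinearMap.range_eq_top.mpr hsurj, finrank_top, Module.finrank_fintype_fun_eq_card,
    Module.finrank_fin_fun, Fintype.card_coe, add_comm] at h
  exact h

theorem exists_timelike_mem_faceSpan (hS : R.IsFace S) :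
    ∃ x ∈ R.cone, x ∈ R.faceSpan S ∧ mink x x < 0 := by
  obtain ⟨x, hx, hxx, hxS⟩ := exists_timelike hS
  exact ⟨x, hx, mem_faceSpan.mpr fun j => (hxS j).mpr, hxx⟩

theorem IsFace.card_le (hS : R.IsFace S) : S.card ≤ n := by
  obtain ⟨x, -, hxS, hxx⟩ := exists_timelike_mem_faceSpan hS
  have hpos : 0 < Module.finrank ℝ (R.faceSpan S) :=
    Module.finrank_pos_iff_exists_ne_zero.mpr
      ⟨⟨x, hxS⟩, fun h => ne_zero_of_mink_self_ne_zero hxx.ne (congrArg Subtype.val h)⟩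
  have := finrank_faceSpan_add_card hS
  lia

theorem IsFace.exists_eq_smul (hS : R.IsFace S) (hn : S.card = n) (hx : x ∈ R.faceSpan S)
    (hx₀ : x ≠ 0) (hz : z ∈ R.faceSpan S) : ∃ c : ℝ, z = c • x := by
  have hdim : Module.finrank ℝ (R.faceSpan S) = 1 := by
    have := finrank_faceSpan_add_card hS
    lia
  obtain ⟨c, hc⟩ := (finrank_eq_one_iff_of_nonzero' (⟨x, hx⟩ : R.faceSpan S)
    fun h => hx₀ (congrArg Subtype.val h)).mp hdim ⟨z, hz⟩
  exact ⟨c, (congrArg Subtype.val hc).symm⟩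

theorem IsFace.card_lt_of_null (hS : R.IsFace S) (hv₀ : v ≠ 0) (hvv : mink v v = 0)
    (hv : v ∈ R.faceSpan S) : S.card < n := by
  refine hS.card_le.lt_of_ne fun hn => ?_
  obtain ⟨x, -, hxS, hxx⟩ := exists_timelike_mem_faceSpan hS
  obtain ⟨c, rfl⟩ := hS.exists_eq_smul hn hv hv₀ hxS
  rw [mink_smul_left, mink_smul_right, hvv, mul_zero, mul_zero] at hxx
  exact hxx.false

theorem IsFace.exists_eq_smul_add_smul (hS : R.IsFace S) (hn : S.card + 1 = n)
    (hxx : mink x x < 0) (hx : x ∈ R.faceSpan S) (hvv : mink v v = 0) (hv₀ : v ≠ 0)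
    (hv : v ∈ R.faceSpan S) (hz : z ∈ R.faceSpan S) : ∃ α β : ℝ, z = α • x + β • v := by
  have hind : LinearIndependent ℝ ![(⟨v, hv⟩ : R.faceSpan S), ⟨x, hx⟩] := by
    refine (LinearIndependent.pair_iff' fun h => hv₀ (congrArg Subtype.val h)).mpr fun c hc => ?_
    have hcx : c • v = x := congrArg Subtype.val hc
    rw [← hcx, mink_smul_left, mink_smul_right, hvv, mul_zero, mul_zero] at hxx
    exact hxx.false
  have hdim : Fintype.card (Fin 2) = Module.finrank ℝ (R.faceSpan S) := by
    have := finrank_faceSpan_add_card hS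
    rw [Fintype.card_fin]
    lia
  have hmem : (⟨z, hz⟩ : R.faceSpan S) ∈ Submodule.span ℝ (Set.range _) :=
    (hind.span_eq_top_of_card_eq_finrank' hdim).ge Submodule.mem_top
  rw [Matrix.range_cons_cons_empty, Submodule.mem_span_pair] at hmem
  obtain ⟨β, α, h⟩ := hmem
  exact ⟨α, β, ((congrArg Subtype.val h).symm.trans (add_comm _ _))⟩

theorem mink_neg_of_ideal (hv : v ∈ R.idealVertices) (hx : x ∈ R.cone) (hxx : mink x x < 0) :
    mink x v < 0 := by
  obtain ⟨hvV, hvv⟩ := mem_idealVertices.mp hv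
  refine mink_neg_of_timelike_of_null hxx hvv
    (R.causal x hx (ne_zero_of_mink_self_ne_zero hxx.ne)).1.le ?_
  rw [R.vertex_zero v hvV]
  exact one_pos

/-! ### Generic heights -/

variable (R) in
/-- A linear functional that vanishes at the vertex `v`, but neither at another vertex nor on a
facet normal. -/
structure GenericAt (f : Module.Dual ℝ (MinkowskiSpace n)) (v : MinkowskiSpace n) : Prop where
  apply_self : f v = 0
  apply_vertex : ∀ w ∈ R.vertices, w ≠ v → f w ≠ 0
  apply_normal : ∀ i, f (R.normal i) ≠ 0

variable {f l : Module.Dual ℝ (MinkowskiSpace n)}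

theorem GenericAt.neg (hf : R.GenericAt f v) : R.GenericAt (-f) v where
  apply_self := by rw [LinearMap.neg_apply, hf.apply_self, neg_zero]
  apply_vertex w hw hwv := neg_ne_zero.mpr (hf.apply_vertex w hw hwv)
  apply_normal i := neg_ne_zero.mpr (hf.apply_normal i)

/-- The height `l` relative to the vertex `v`, made homogeneous by means of the time coordinate. -/
def relHeight (l : Module.Dual ℝ (MinkowskiSpace n)) (v : MinkowskiSpace n) :
    Module.Dual ℝ (MinkowskiSpace n) :=
  l - l v • LinearMap.proj 0

variable (R) in
/-- A height function that separates the vertices and is in general position to the facets. -/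
def GenericHeight (l : Module.Dual ℝ (MinkowskiSpace n)) : Prop :=
  ∀ v ∈ R.vertices, R.GenericAt (relHeight l v) v

theorem relHeight_apply (l : Module.Dual ℝ (MinkowskiSpace n)) (v x : MinkowskiSpace n) :
    relHeight l v x = l x - l v * x 0 := rfl

theorem relHeight_neg (l : Module.Dual ℝ (MinkowskiSpace n)) (v : MinkowskiSpace n) :
    relHeight (-l) v = -relHeight l v := by
  refine LinearMap.ext fun x => ?_
  rw [relHeight_apply, LinearMap.neg_apply, LinearMap.neg_apply, LinearMap.neg_apply,
    relHeight_apply]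
  ring

theorem relHeight_vertex {w : MinkowskiSpace n} (hw : w ∈ R.vertices) :
    relHeight l v w = l w - l v := by
  rw [relHeight_apply, R.vertex_zero w hw, mul_one]

theorem GenericHeight.neg (hl : R.GenericHeight l) : R.GenericHeight (-l) := fun v hv => by
  rw [relHeight_neg]
  exact (hl v hv).neg

theorem normal_ne_smul_vertex (hv : v ∈ R.vertices) (i : ι) (c : ℝ) : R.normal i ≠ c • v := by
  intro h
  have hunit := R.mink_normal_self i
  rw [h, mink_smul_left, mink_smul_right] at hunit
  nlinarith [vertex_causal hv, mul_self_nonneg c]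

variable (R) in
theorem exists_genericHeight [Finite ι] : ∃ l, R.GenericHeight l := by
  obtain ⟨l, hl⟩ := Module.exists_dual_forall_apply_ne_zero (K := ℝ)
    (ι := {q : R.vertices × R.vertices // q.1 ≠ q.2} ⊕ (R.vertices × ι))
    (Sum.elim (fun q => (q.1.1 : MinkowskiSpace n) - q.1.2)
      fun q => R.normal q.2 - R.normal q.2 0 • (q.1 : MinkowskiSpace n)) (by
    rintro (⟨⟨v, w⟩, h⟩ | ⟨v, i⟩)
    · exact sub_ne_zero.mpr fun h' => h (Subtype.ext h')
    · exact sub_ne_zero.mpr (normal_ne_smul_vertex v.2 i _))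
  refine ⟨l, fun v hv => ⟨?_, fun w hw hwv => ?_, fun i => ?_⟩⟩
  · rw [relHeight_vertex hv, sub_self]
  · have := hl (Sum.inl ⟨(⟨w, hw⟩, ⟨v, hv⟩), fun h => hwv (congrArg Subtype.val h)⟩)
    rwa [Sum.elim_inl, map_sub, ← relHeight_vertex hw] at this
  · have := hl (Sum.inr (⟨v, hv⟩, i))
    rwa [Sum.elim_inr, map_sub, map_smul, smul_eq_mul, mul_comm, ← relHeight_apply] at this

/-! ### Facets through a point -/

variable [Fintype ι]

variable (R) in
/-- The facets through a point. The point `x` lies on the face `S` when `S ⊆ R.facetsAt x`. -/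
def facetsAt (x : MinkowskiSpace n) : Finset ι := {i | mink (R.normal i) x = 0}

variable (R) in
/-- The facets orthogonal to all members of `S`, that is, the facets of the face `S`. -/
def adjacent (S : Finset ι) : Finset ι := {i | ∀ j ∈ S, mink (R.normal j) (R.normal i) = 0}

variable (R) in
/-- The facets of the face `S` that pass through the point `x`. -/
def adjacentAt (x : MinkowskiSpace n) (S : Finset ι) : Finset ι := R.facetsAt x ∩ R.adjacent S

variable {o : ι} {u : MinkowskiSpace n}

@[simp]
theorem mem_facetsAt : i ∈ R.facetsAt x ↔ mink (R.normal i) x = 0 := by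
  simp [facetsAt]

@[simp]
theorem mem_adjacent : i ∈ R.adjacent S ↔ ∀ j ∈ S, mink (R.normal j) (R.normal i) = 0 := by
  simp [adjacent]

theorem mem_adjacentAt : i ∈ R.adjacentAt x S ↔ i ∈ R.facetsAt x ∧ i ∈ R.adjacent S :=
  Finset.mem_inter

theorem mem_faceSpan_iff_subset_facetsAt : x ∈ R.faceSpan S ↔ S ⊆ R.facetsAt x := by
  simp only [mem_faceSpan, Finset.subset_iff, mem_facetsAt]

theorem notMem_of_mem_adjacent (h : i ∈ R.adjacent S) : i ∉ S :=
  fun hi => ne_of_mink_normal_nonpos (mem_adjacent.mp h i hi).le rfl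

theorem card_insert_of_mem_adjacent (h : i ∈ R.adjacent S) : (insert i S).card = S.card + 1 :=
  Finset.card_insert_of_notMem (notMem_of_mem_adjacent h)

theorem IsFace.insert_of_mem_adjacent (hS : R.IsFace S) (h : i ∈ R.adjacent S) :
    R.IsFace (insert i S) :=
  hS.insert_of_orthogonal (mem_adjacent.mp h)

theorem mem_adjacent_of_isFace_insert (h : R.IsFace (insert i S)) (hi : i ∉ S) :
    i ∈ R.adjacent S := by
  refine mem_adjacent.mpr fun j hj =>
    h (Finset.mem_insert_of_mem hj) (Finset.mem_insert_self i S) ?_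
  rintro rfl
  exact hi hj

theorem exists_face_combination (hx : x ∈ R.cone) :
    ∃ a : MinkowskiSpace n → ℝ, (∀ v, 0 ≤ a v) ∧
      (∀ v ∈ R.vertices, a v ≠ 0 → R.facetsAt x ⊆ R.facetsAt v) ∧
      x = ∑ v ∈ R.vertices, a v • v := by
  obtain ⟨a, ha, hxa⟩ := R.exists_eq_sum x hx
  refine ⟨a, ha, fun v hv hav i hi => mem_facetsAt.mpr ?_, hxa⟩
  rw [mem_facetsAt, hxa, mink_sum_right] at hi
  have hle : ∀ w ∈ R.vertices, mink (R.normal i) (a w • w) ≤ 0 := fun w hw => by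
    rw [mink_smul_right]
    exact mul_nonpos_of_nonneg_of_nonpos (ha w) (R.mink_vertex_nonpos w hw i)
  have hzero := (Finset.sum_eq_zero_iff_of_nonpos hle).mp hi v hv
  rw [mink_smul_right] at hzero
  exact (mul_eq_zero.mp hzero).resolve_left hav

theorem linear_nonpos_on_face {L : Module.Dual ℝ (MinkowskiSpace n)}
    (hL : ∀ v ∈ R.vertices, S ⊆ R.facetsAt v → L v ≤ 0) (hx : x ∈ R.cone)
    (hS : S ⊆ R.facetsAt x) : L x ≤ 0 := by
  obtain ⟨a, ha, hface, hxa⟩ := exists_face_combination hx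
  rw [hxa, map_sum]
  refine Finset.sum_nonpos fun v hv => ?_
  rw [map_smul, smul_eq_mul]
  obtain h | h := eq_or_ne (a v) 0
  · rw [h, zero_mul]
  · exact mul_nonpos_of_nonneg_of_nonpos (ha v) (hL v hv (hS.trans (hface v hv h)))

theorem IsFace.exists_vertex (hS : R.IsFace S) : ∃ v ∈ R.vertices, S ⊆ R.facetsAt v := by
  obtain ⟨x, hx, hxS, hxx⟩ := exists_timelike_mem_faceSpan hS
  by_contra! hcon
  have hx₀ : x 0 ≤ 0 := linear_nonpos_on_face (L := LinearMap.proj 0)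
    (fun v hv h => absurd h (hcon v hv)) hx (mem_faceSpan_iff_subset_facetsAt.mp hxS)
  exact hx₀.not_gt (R.causal x hx (ne_zero_of_mink_self_ne_zero hxx.ne)).1

theorem eventually_add_smul_mem_cone (hx : x ∈ R.cone)
    (hu : ∀ i ∈ R.facetsAt x, mink (R.normal i) u ≤ 0) :
    ∀ᶠ t : ℝ in nhdsWithin 0 (Set.Ioi 0), x + t • u ∈ R.cone := by
  filter_upwards [eventually_forall_apply_add_smul_nonpos (s := Finset.univ)
    (f := fun i => minkForm n (R.normal i)) (fun i _ => hx i)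
    fun i _ hi => hu i (mem_facetsAt.mpr hi)] with t ht i using ht i (Finset.mem_univ i)

theorem exists_add_smul_mem_cone (hx : x ∈ R.cone)
    (hu : ∀ i ∈ R.facetsAt x, mink (R.normal i) u ≤ 0) :
    ∃ t : ℝ, 0 < t ∧ x + t • u ∈ R.cone :=
  (eventually_mem_nhdsWithin.and (eventually_add_smul_mem_cone hx hu)).exists

theorem exists_eq_smul_of_mem_faceSpan_facetsAt (hv : v ∈ R.vertices)
    (hu : u ∈ R.faceSpan (R.facetsAt v)) : ∃ c : ℝ, u = c • v := by
  have hplus := eventually_add_smul_mem_cone (u := u) (R.mink_vertex_nonpos v hv)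
    fun i hi => (mem_faceSpan.mp hu i hi).le
  have hminus := eventually_add_smul_mem_cone (u := -u) (R.mink_vertex_nonpos v hv)
    fun i hi => (mem_faceSpan.mp (neg_mem hu) i hi).le
  obtain ⟨t, ⟨ht₁, ht₂⟩, ht₀⟩ := ((hplus.and hminus).and self_mem_nhdsWithin).exists
  obtain ⟨c, hc⟩ := R.extreme v hv (t • u) ht₁ (by rwa [smul_neg, ← sub_eq_add_neg] at ht₂)
  exact ⟨t⁻¹ * c, by rw [mul_smul, ← hc, inv_smul_smul₀ (ne_of_gt ht₀)]⟩

/-! ### Finite vertices -/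

theorem mink_normal_add_normal (hi : i ∈ R.facetsAt v) (hj : j ∈ R.facetsAt v) :
    mink (R.normal i + R.normal j) v = 0 := by
  rw [mink_add_left, mem_facetsAt.mp hi, mem_facetsAt.mp hj, add_zero]

theorem isFace_facetsAt_of_timelike (hvv : mink v v < 0) : R.IsFace (R.facetsAt v) := by
  intro i hi j hj hij
  refine (R.mink_normal i j hij).resolve_right fun h => ?_
  have := mink_self_pos_of_orthogonal hvv (R.normal_add_normal_ne_zero i j)
    (mink_normal_add_normal hi hj)
  rw [R.mink_normal_add_normal_self] at this
  linarith

theorem card_facetsAt_of_timelike (hv : v ∈ R.vertices) (hvv : mink v v < 0) :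
    (R.facetsAt v).card = n := by
  have hface := isFace_facetsAt_of_timelike (R := R) hvv
  have hvS : v ∈ R.faceSpan (R.facetsAt v) := mem_faceSpan_iff_subset_facetsAt.mpr subset_rfl
  have hdim : Module.finrank ℝ (R.faceSpan (R.facetsAt v)) ≤ 1 := by
    refine finrank_le_one ⟨v, hvS⟩ fun u => ?_
    obtain ⟨c, hc⟩ := exists_eq_smul_of_mem_faceSpan_facetsAt hv u.2
    exact ⟨c, Subtype.ext hc.symm⟩
  have := finrank_faceSpan_add_card hface
  have := hface.card_le
  lia

/-! ### Ideal vertices -/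

variable (R) in
/-- Two facets through the ideal vertex `v` that meet only there. In the Euclidean link of `v`
they are opposite sides of a box. -/
def IsOpposite (v : MinkowskiSpace n) (i o : ι) : Prop :=
  i ∈ R.facetsAt v ∧ o ∈ R.facetsAt v ∧ mink (R.normal i) (R.normal o) = -1

theorem IsOpposite.symm (h : R.IsOpposite v i o) : R.IsOpposite v o i :=
  ⟨h.2.1, h.1, by rw [mink_comm]; exact h.2.2⟩

theorem IsOpposite.ne (h : R.IsOpposite v i o) : i ≠ o :=
  ne_of_mink_normal_nonpos (by linarith [h.2.2])

theorem isOpposite_of_mink_ne_zero (hv : v ∈ R.idealVertices) (hi : i ∈ R.facetsAt v)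
    (hj : j ∈ R.facetsAt v) (hij : i ≠ j) (h : mink (R.normal i) (R.normal j) ≠ 0) :
    R.IsOpposite v i j := by
  obtain ⟨hvV, hvv⟩ := mem_idealVertices.mp hv
  have hle := (R.mink_normal i j hij).resolve_left h
  have hnn := mink_self_nonneg_of_orthogonal hvv.le (vertex_ne_zero hvV)
    (mink_normal_add_normal hi hj)
  rw [R.mink_normal_add_normal_self] at hnn
  exact ⟨hi, hj, by linarith⟩

theorem IsOpposite.exists_add_eq_smul (hv : v ∈ R.idealVertices) (h : R.IsOpposite v i o) :
    ∃ c : ℝ, c ≠ 0 ∧ R.normal i + R.normal o = c • v := by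
  obtain ⟨hvV, hvv⟩ := mem_idealVertices.mp hv
  have hnull : mink (R.normal i + R.normal o) (R.normal i + R.normal o) = 0 := by
    rw [R.mink_normal_add_normal_self, h.2.2]
    norm_num
  obtain ⟨c, hc⟩ := exists_eq_smul_of_orthogonal hvv.le (vertex_ne_zero hvV)
    (mink_normal_add_normal h.1 h.2.1) hnull.le
  refine ⟨c, ?_, hc⟩
  rintro rfl
  exact R.normal_add_normal_ne_zero i o (by rw [hc, zero_smul])

theorem IsOpposite.vertex_eq {w : MinkowskiSpace n} (hv : v ∈ R.idealVertices)
    (hw : w ∈ R.idealVertices) (hvio : R.IsOpposite v i o) (hwio : R.IsOpposite w i o) : v = w := by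
  obtain ⟨c, hc₀, hc⟩ := hvio.exists_add_eq_smul hv
  obtain ⟨c', -, hc'⟩ := hwio.exists_add_eq_smul hw
  refine eq_of_eq_smul_vertex (c := c⁻¹ * c') (mem_idealVertices.mp hw).1
    (mem_idealVertices.mp hv).1 ?_
  rw [mul_smul, ← hc', hc, inv_smul_smul₀ hc₀]

theorem IsOpposite.mink_eq_zero (hv : v ∈ R.idealVertices) (h : R.IsOpposite v i o)
    (hu : mink u v = 0) (hi : mink u (R.normal i) = 0) : mink u (R.normal o) = 0 := by
  obtain ⟨c, -, hc⟩ := h.exists_add_eq_smul hv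
  rw [eq_sub_of_add_eq' hc, mink_sub_right, mink_smul_right, hu, hi, mul_zero, sub_zero]

theorem IsOpposite.eq {j k : ι} (hv : v ∈ R.idealVertices) (hj : R.IsOpposite v i j)
    (hk : R.IsOpposite v i k) : j = k := by
  obtain ⟨c, -, hc⟩ := hj.exists_add_eq_smul hv
  by_contra hjk
  have hle := R.mink_normal_nonpos hjk
  rw [eq_sub_of_add_eq' hc, mink_sub_left, mink_smul_left, hk.2.2, mink_comm v,
    mem_facetsAt.mp hk.2.1] at hle
  norm_num at hle

theorem IsOpposite.mink_normal_eq_zero (hv : v ∈ R.idealVertices) (h : R.IsOpposite v i o)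
    (hj : j ∈ R.facetsAt v) (hji : j ≠ i) (hjo : j ≠ o) :
    mink (R.normal i) (R.normal j) = 0 := by
  by_contra hne
  exact hjo ((isOpposite_of_mink_ne_zero hv h.1 hj hji.symm hne).eq hv h)

theorem exists_isOpposite (hv : v ∈ R.idealVertices) (hi : i ∈ R.facetsAt v) :
    ∃ o, R.IsOpposite v i o := by
  by_contra! hcon
  obtain ⟨hvV, hvv⟩ := mem_idealVertices.mp hv
  have hinward : ∀ j ∈ R.facetsAt v, mink (R.normal j) (-R.normal i) ≤ 0 := by
    intro j hj
    rw [mink_neg_right, neg_nonpos]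
    obtain rfl | hji := eq_or_ne j i
    · rw [R.mink_normal_self]
      exact zero_le_one
    · by_contra hne
      exact hcon j (isOpposite_of_mink_ne_zero hv hi hj hji.symm
        (by rw [mink_comm]; exact (not_le.mp hne).ne))
  obtain ⟨t, ht, hmem⟩ := exists_add_smul_mem_cone (R.mink_vertex_nonpos v hvV) hinward
  have hnorm : mink (v + t • -R.normal i) (v + t • -R.normal i) = t ^ 2 := by
    rw [mink_add_smul_self, hvv, mink_comm v, mink_comm, ← neg_one_smul ℝ (R.normal i)]
    simp only [mink_smul_left, mink_smul_right, R.mink_normal_self, mem_facetsAt.mp hi,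
      mink_comm v]
    ring
  have hpos : 0 < t ^ 2 := by positivity
  have hcausal := (R.causal _ hmem (ne_zero_of_mink_self_ne_zero (hnorm ▸ hpos.ne'))).2
  linarith

theorem IsOpposite.adjacent_of_adjacent (hv : v ∈ R.idealVertices) (h : R.IsOpposite v i o)
    (hSv : S ⊆ R.facetsAt v) (hi : i ∈ R.adjacent S) : o ∈ R.adjacent S :=
  mem_adjacent.mpr fun j hj => h.mink_eq_zero hv (mem_facetsAt.mp (hSv hj))
    (mem_adjacent.mp hi j hj)

theorem IsFace.card_lt_of_ideal (hS : R.IsFace S) (hv : v ∈ R.idealVertices)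
    (hSv : S ⊆ R.facetsAt v) : S.card < n := by
  obtain ⟨hvV, hvv⟩ := mem_idealVertices.mp hv
  exact hS.card_lt_of_null (vertex_ne_zero hvV) hvv (mem_faceSpan_iff_subset_facetsAt.mpr hSv)

theorem mem_faceSpan_facetsAt_of_adjacentAt_eq_empty (hv : v ∈ R.idealVertices)
    (hSv : S ⊆ R.facetsAt v) (hempty : R.adjacentAt v S = ∅) (hu : u ∈ R.faceSpan S)
    (huv : mink u v = 0) : u ∈ R.faceSpan (R.facetsAt v) := by
  rw [mem_faceSpan] at hu ⊢
  intro i hi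
  by_cases hiS : i ∈ S
  · exact hu i hiS
  · have hadj : i ∉ R.adjacent S := fun h =>
      Finset.notMem_empty i (hempty ▸ mem_adjacentAt.mpr ⟨hi, h⟩)
    rw [mem_adjacent] at hadj
    push Not at hadj
    obtain ⟨j, hj, hji⟩ := hadj
    have hopp := isOpposite_of_mink_ne_zero hv (hSv hj) hi (fun h => hiS (h ▸ hj)) hji
    rw [mink_comm]
    exact hopp.mink_eq_zero hv huv (by rw [mink_comm]; exact hu j hj)

theorem IsFace.adjacentAt_nonempty (hS : R.IsFace S) (hv : v ∈ R.idealVertices)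
    (hSv : S ⊆ R.facetsAt v) (hcard : S.card + 1 < n) : (R.adjacentAt v S).Nonempty := by
  by_contra hempty
  rw [Finset.not_nonempty_iff_eq_empty] at hempty
  let f : MinkowskiSpace n →ₗ[ℝ] ℝ × ℝ := (minkForm n v).prod (LinearMap.proj 0)
  have hker : LinearMap.ker (f.domRestrict (R.faceSpan S)) ≠ ⊥ := by
    refine LinearMap.ker_ne_bot_of_finrank_lt ?_
    have := finrank_faceSpan_add_card hS
    rw [Module.finrank_prod, Module.finrank_self]
    lia
  obtain ⟨⟨u, huS⟩, hu, hu₀⟩ := Submodule.exists_mem_ne_zero_of_ne_bot hker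
  obtain ⟨hvu, hu_zero⟩ : mink v u = 0 ∧ u 0 = 0 := Prod.ext_iff.mp (LinearMap.mem_ker.mp hu)
  obtain ⟨hvV, -⟩ := mem_idealVertices.mp hv
  obtain ⟨c, rfl⟩ := exists_eq_smul_of_mem_faceSpan_facetsAt hvV
    (mem_faceSpan_facetsAt_of_adjacentAt_eq_empty hv hSv hempty huS (by rwa [mink_comm]))
  rw [Pi.smul_apply, R.vertex_zero v hvV, smul_eq_mul, mul_one] at hu_zero
  exact hu₀ (Subtype.ext (by simp only [hu_zero, zero_smul, ZeroMemClass.coe_zero]))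

theorem IsOpposite.adjacentAt_eq_insert (hv : v ∈ R.idealVertices) (h : R.IsOpposite v i o)
    (hSv : S ⊆ R.facetsAt v) (hi : i ∈ R.adjacent S) :
    R.adjacentAt v S = insert i (insert o (R.adjacentAt v (insert i S))) := by
  ext j
  simp only [Finset.mem_insert, mem_adjacentAt, mem_adjacent,
    forall_eq_or_imp]
  constructor
  · rintro ⟨hjv, hjS⟩
    by_cases hji : j = i
    · exact Or.inl hji
    · by_cases hjo : j = o
      · exact Or.inr (Or.inl hjo)
      · exact Or.inr (Or.inr ⟨hjv, h.mink_normal_eq_zero hv hjv hji hjo, hjS⟩)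
  · rintro (rfl | rfl | ⟨hjv, -, hjS⟩)
    · exact ⟨h.1, mem_adjacent.mp hi⟩
    · exact ⟨h.2.1, mem_adjacent.mp (h.adjacent_of_adjacent hv hSv hi)⟩
    · exact ⟨hjv, hjS⟩

/-- The link of an ideal vertex in a `(d + 1)`-dimensional face is a `d`-dimensional box. -/
theorem IsFace.card_adjacentAt_of_ideal (hv : v ∈ R.idealVertices) {d : ℕ} (hS : R.IsFace S)
    (hSv : S ⊆ R.facetsAt v) (hd : S.card + d + 1 = n) : (R.adjacentAt v S).card = 2 * d := by
  induction d generalizing S with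
  | zero =>
    rw [mul_zero, Finset.card_eq_zero, Finset.eq_empty_iff_forall_notMem]
    intro i hi
    obtain ⟨hiv, hiS⟩ := mem_adjacentAt.mp hi
    have := (hS.insert_of_mem_adjacent hiS).card_lt_of_ideal hv (Finset.insert_subset hiv hSv)
    rw [card_insert_of_mem_adjacent hiS] at this
    lia
  | succ d ih =>
    obtain ⟨i, hi⟩ := hS.adjacentAt_nonempty hv hSv (by lia)
    obtain ⟨hiv, hiS⟩ := mem_adjacentAt.mp hi
    obtain ⟨o, ho⟩ := exists_isOpposite hv hiv
    have ho_notMem : o ∉ R.adjacentAt v (insert i S) := fun h => by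
      have := mem_adjacent.mp (mem_adjacentAt.mp h).2 i
        (Finset.mem_insert_self i S)
      linarith [ho.2.2]
    have hi_notMem : i ∉ insert o (R.adjacentAt v (insert i S)) := fun h =>
      (Finset.mem_insert.mp h).elim ho.ne fun h =>
        notMem_of_mem_adjacent (mem_adjacentAt.mp h).2 (Finset.mem_insert_self i S)
    rw [ho.adjacentAt_eq_insert hv hSv hiS, Finset.card_insert_of_notMem hi_notMem,
      Finset.card_insert_of_notMem ho_notMem,
      ih (hS.insert_of_mem_adjacent hiS) (Finset.insert_subset hiv hSv)
        (by rw [card_insert_of_mem_adjacent hiS]; lia)]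
    ring

/-! ### The Euler relation -/

variable (R) in
/-- The number of ideal vertices of the face `S`. -/
def idealCount (S : Finset ι) : ℕ := {v ∈ R.idealVertices | S ⊆ R.facetsAt v}.card

variable (R) in
/-- The linear functional `f` is nonpositive on the face `S`. -/
def NonposOn (f : Module.Dual ℝ (MinkowskiSpace n)) (S : Finset ι) : Prop :=
  ∀ x ∈ R.cone, S ⊆ R.facetsAt x → f x ≤ 0

variable (R) in
/-- The contribution of the vertex `v` to the Euler characteristic of the face `S`: the alternating
sum over the faces of `S` on which `f` attains its maximum at `v`. -/
def vertexSum (f : Module.Dual ℝ (MinkowskiSpace n)) (v : MinkowskiSpace n) (S : Finset ι) : ℤ :=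
  ∑ T with R.IsFace T ∧ S ⊆ T ∧ T ⊆ R.facetsAt v ∧ R.NonposOn f T, (-1) ^ T.card

theorem NonposOn.mono (h : R.NonposOn f S) (hST : S ⊆ T) : R.NonposOn f T :=
  fun x hx hT => h x hx (hST.trans hT)

/-- Projecting to the facet `i` does not decrease `f` when `f` is nonnegative on its normal. -/
theorem nonposOn_insert_iff (hi : 0 ≤ f (R.normal i)) (hS : R.IsFace (insert i S)) :
    R.NonposOn f (insert i S) ↔ R.NonposOn f S := by
  refine ⟨fun h x hx hSx => ?_, fun h => h.mono (Finset.subset_insert _ _)⟩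
  have hproj := h _ (sub_smul_normal_mem_cone hx i) (mem_faceSpan_iff_subset_facetsAt.mp
    (sub_smul_normal_mem_faceSpan (mem_faceSpan_iff_subset_facetsAt.mpr hSx) hS))
  rw [map_sub, map_smul, smul_eq_mul] at hproj
  nlinarith [hx i]

theorem sum_neg_one_pow_card_eq_zero (p : Finset ι → Prop) [DecidablePred p] (s : ι)
    (h : ∀ T, s ∉ T → (p (insert s T) ↔ p T)) :
    ∑ T with p T, (-1 : ℤ) ^ T.card = 0 := by
  refine Finset.sum_involution (fun T _ => if s ∈ T then T.erase s else insert s T) ?_ ?_ ?_ ?_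
  · intro T _
    split_ifs with hs
    · rw [← Finset.card_erase_add_one hs, pow_succ]
      ring
    · rw [Finset.card_insert_of_notMem hs, pow_succ]
      ring
  · intro T _ _
    split_ifs with hs
    · exact fun hT => Finset.notMem_erase s T (hT.symm ▸ hs)
    · exact fun hT => hs (hT ▸ Finset.mem_insert_self s T)
  · intro T hT
    simp only [Finset.mem_filter, Finset.mem_univ, true_and] at hT ⊢
    split_ifs with hs
    · exact (h _ (Finset.notMem_erase s T)).mp (by rwa [Finset.insert_erase hs])
    · exact (h T hs).mpr hT
  · intro T _
    by_cases hs : s ∈ T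
    · simp only [hs, ↓reduceIte, Finset.notMem_erase, Finset.insert_erase]
    · simp only [hs, ↓reduceIte, Finset.mem_insert_self, Finset.erase_insert, not_false_eq_true]

theorem vertexSum_eq_add (i : ι) (S : Finset ι) : R.vertexSum f v S = R.vertexSum f v (insert i S) +
    ∑ T with (R.IsFace T ∧ S ⊆ T ∧ T ⊆ R.facetsAt v ∧ R.NonposOn f T) ∧ i ∉ T,
      (-1) ^ T.card := by
  rw [vertexSum, ← Finset.sum_filter_add_sum_filter_not _ (fun T => i ∈ T), Finset.filter_filter,
    Finset.filter_filter, vertexSum]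
  congr 2
  refine Finset.filter_congr fun T _ => ?_
  rw [Finset.insert_subset_iff]
  tauto

/-! #### Finite vertices -/

theorem eq_of_facetsAt_subset (hv : v ∈ R.vertices) (hvv : mink v v < 0) {w : MinkowskiSpace n}
    (hw : w ∈ R.vertices) (hvw : R.facetsAt v ⊆ R.facetsAt w) : w = v := by
  obtain ⟨c, hc⟩ := (isFace_facetsAt_of_timelike hvv).exists_eq_smul
    (card_facetsAt_of_timelike hv hvv) (mem_faceSpan_iff_subset_facetsAt.mpr subset_rfl)
    (vertex_ne_zero hv) (mem_faceSpan_iff_subset_facetsAt.mpr hvw)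
  exact eq_of_eq_smul_vertex hv hw hc

theorem nonposOn_facetsAt_of_timelike (hf : f v = 0) (hv : v ∈ R.vertices) (hvv : mink v v < 0) :
    R.NonposOn f (R.facetsAt v) := fun x hx hvx =>
  linear_nonpos_on_face
    (fun w hw hvw => by rw [eq_of_facetsAt_subset hv hvv hw hvw, hf]) hx hvx

theorem not_nonposOn_of_timelike (hf : f v = 0) (hv : v ∈ R.vertices) (hvv : mink v v < 0)
    (hi : i ∈ R.facetsAt v) (hfi : f (R.normal i) < 0) (hS : S ⊆ R.facetsAt v) (hiS : i ∉ S) :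
    ¬ R.NonposOn f S := by
  intro hnonpos
  have hface := isFace_facetsAt_of_timelike (R := R) hvv
  obtain ⟨t, ht, hmem⟩ := exists_add_smul_mem_cone (u := -R.normal i)
    (R.mink_vertex_nonpos v hv) fun j hj => by
      rw [mink_neg_right]
      obtain rfl | h := eq_or_ne j i
      · rw [R.mink_normal_self]
        norm_num
      · rw [hface hj hi h, neg_zero]
  have hle := hnonpos _ hmem fun j hj => by
    rw [mem_facetsAt, mink_add_right, mink_smul_right, mink_neg_right, mem_facetsAt.mp (hS hj),
      hface (hS hj) hi (ne_of_mem_of_not_mem hj hiS)]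
    ring
  rw [map_add, map_smul, map_neg, hf, smul_eq_mul] at hle
  nlinarith

theorem vertexSum_facetsAt_of_timelike (hf : f v = 0) (hv : v ∈ R.vertices) (hvv : mink v v < 0) :
    R.vertexSum f v (R.facetsAt v) = (-1) ^ n := by
  have hfilter : ({T | R.IsFace T ∧ R.facetsAt v ⊆ T ∧ T ⊆ R.facetsAt v ∧ R.NonposOn f T} :
      Finset (Finset ι)) = {R.facetsAt v} := by
    ext T
    simp only [Finset.mem_filter, Finset.mem_univ, true_and, Finset.mem_singleton]
    constructor
    · exact fun h => h.2.2.1.antisymm h.2.1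
    · rintro rfl
      exact ⟨isFace_facetsAt_of_timelike hvv, subset_rfl, subset_rfl,
        nonposOn_facetsAt_of_timelike hf hv hvv⟩
  rw [vertexSum, hfilter, Finset.sum_singleton, card_facetsAt_of_timelike hv hvv]

theorem vertexSum_eq_insert_of_timelike (hf : f v = 0) (hv : v ∈ R.vertices) (hvv : mink v v < 0)
    (hi : i ∈ R.facetsAt v) (hfi : f (R.normal i) < 0) :
    R.vertexSum f v S = R.vertexSum f v (insert i S) := by
  rw [vertexSum_eq_add i S, add_eq_left, Finset.filter_eq_empty_iff.mpr, Finset.sum_empty]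
  rintro T - ⟨⟨-, -, hTv, hT⟩, hiT⟩
  exact not_nonposOn_of_timelike hf hv hvv hi hfi hTv hiT hT

theorem vertexSum_eq_zero_of_timelike (hvv : mink v v < 0) (hi : i ∈ R.facetsAt v)
    (hfi : 0 < f (R.normal i)) (hiS : i ∉ S) : R.vertexSum f v S = 0 := by
  refine sum_neg_one_pow_card_eq_zero _ i fun T _ => ?_
  have hface := isFace_facetsAt_of_timelike (R := R) hvv
  rw [Finset.insert_subset_iff, Finset.subset_insert_iff_of_notMem hiS]
  constructor
  · rintro ⟨hT, hST, ⟨-, hTv⟩, hnonpos⟩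
    exact ⟨hface.mono hTv, hST, hTv, (nonposOn_insert_iff hfi.le hT).mp hnonpos⟩
  · rintro ⟨-, hST, hTv, hnonpos⟩
    have hT := hface.mono (Finset.insert_subset hi hTv)
    exact ⟨hT, hST, ⟨hi, hTv⟩, (nonposOn_insert_iff hfi.le hT).mpr hnonpos⟩

theorem vertexSum_of_timelike (hf : R.GenericAt f v) (hv : v ∈ R.vertices) (hvv : mink v v < 0)
    (hS : S ⊆ R.facetsAt v) :
    R.vertexSum f v S = if R.NonposOn (-f) S then (-1) ^ n else 0 := by
  induction hd : (R.facetsAt v \ S).card generalizing S with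
  | zero =>
    have hSv : S = R.facetsAt v :=
      hS.antisymm (Finset.sdiff_eq_empty_iff_subset.mp (Finset.card_eq_zero.mp hd))
    rw [hSv, if_pos (nonposOn_facetsAt_of_timelike hf.neg.apply_self hv hvv),
      vertexSum_facetsAt_of_timelike hf.apply_self hv hvv]
  | succ d ih =>
    obtain ⟨i, hi⟩ : (R.facetsAt v \ S).Nonempty := Finset.card_pos.mp (by lia)
    obtain ⟨hiv, hiS⟩ := Finset.mem_sdiff.mp hi
    have hins : insert i S ⊆ R.facetsAt v := Finset.insert_subset hiv hS
    rcases lt_or_gt_of_ne (hf.apply_normal i) with hneg | hpos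
    · rw [vertexSum_eq_insert_of_timelike hf.apply_self hv hvv hiv hneg, ih hins, if_congr
        (nonposOn_insert_iff (by rw [LinearMap.neg_apply]; linarith)
          ((isFace_facetsAt_of_timelike hvv).mono hins)) rfl rfl]
      rw [Finset.sdiff_insert, Finset.card_erase_of_mem hi, hd, add_tsub_cancel_right]
    · rw [vertexSum_eq_zero_of_timelike hvv hiv hpos hiS, if_neg]
      exact not_nonposOn_of_timelike hf.neg.apply_self hv hvv hiv
        (by rw [LinearMap.neg_apply]; linarith) hS hiS

/-! #### Ideal vertices -/

theorem IsFace.exists_vertex_ne (hS : R.IsFace S) (hv : v ∈ R.idealVertices) :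
    ∃ w ∈ R.vertices, S ⊆ R.facetsAt w ∧ w ≠ v := by
  by_contra! hcon
  obtain ⟨x, hx, hxS, hxx⟩ := exists_timelike_mem_faceSpan hS
  have hle : -mink v x ≤ 0 := linear_nonpos_on_face (L := -minkForm n v)
    (fun w hw hSw => by
      rw [hcon w hw hSw, LinearMap.neg_apply]
      exact (neg_eq_zero.mpr (mem_idealVertices.mp hv).2).le)
    hx (mem_faceSpan_iff_subset_facetsAt.mp hxS)
  rw [mink_comm] at hle
  linarith [mink_neg_of_ideal hv hx hxx]

theorem IsFace.nonposOn_or_nonposOn_neg (hS : R.IsFace S) (hf : f v = 0)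
    (hv : v ∈ R.idealVertices) (hSv : S ⊆ R.facetsAt v) (hcard : S.card + 1 = n) :
    R.NonposOn f S ∨ R.NonposOn (-f) S := by
  obtain ⟨hvV, hvv⟩ := mem_idealVertices.mp hv
  obtain ⟨x, hx, hxS, hxx⟩ := exists_timelike_mem_faceSpan hS
  have hray : ∀ y ∈ R.cone, S ⊆ R.facetsAt y → ∃ α : ℝ, 0 ≤ α ∧ f y = α * f x := by
    intro y hy hSy
    obtain ⟨α, β, rfl⟩ := hS.exists_eq_smul_add_smul hcard hxx hxS hvv (vertex_ne_zero hvV)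
      (mem_faceSpan_iff_subset_facetsAt.mpr hSv) (mem_faceSpan_iff_subset_facetsAt.mpr hSy)
    refine ⟨α, ?_, by rw [map_add, map_smul, map_smul, hf, smul_zero, add_zero, smul_eq_mul]⟩
    obtain h₀ | h₀ := eq_or_ne (α • x + β • v) 0
    · have := congrArg (mink v) h₀
      rw [mink_add_right, mink_smul_right, mink_smul_right, hvv, mul_zero, add_zero, mink_comm v,
        mink_comm v, mink_zero_left] at this
      exact ((mul_eq_zero.mp this).resolve_right (mink_neg_of_ideal hv hx hxx).ne).ge
    · have hcausal := R.causal _ hy h₀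
      have hle := mink_nonpos_of_causal hcausal.2 hvv.le hcausal.1.le
        (by rw [R.vertex_zero v hvV]; exact zero_le_one)
      rw [mink_add_left, mink_smul_left, mink_smul_left, hvv, mul_zero, add_zero] at hle
      exact nonneg_of_mul_nonpos_left hle (mink_neg_of_ideal hv hx hxx)
  refine (le_total (f x) 0).imp (fun hle y hy hSy => ?_) (fun hle y hy hSy => ?_)
  · obtain ⟨α, hα, hfy⟩ := hray y hy hSy
    rw [hfy]
    exact mul_nonpos_of_nonneg_of_nonpos hα hle
  · obtain ⟨α, hα, hfy⟩ := hray y hy hSy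
    rw [LinearMap.neg_apply, hfy, neg_nonpos]
    exact mul_nonneg hα hle

theorem nonposOn_iff_not_nonposOn_neg (hf : R.GenericAt f v) (hv : v ∈ R.idealVertices)
    (hS : R.IsFace S) (hSv : S ⊆ R.facetsAt v) (hcard : S.card + 1 = n) :
    R.NonposOn f S ↔ ¬ R.NonposOn (-f) S := by
  refine ⟨fun h h' => ?_,
    (hS.nonposOn_or_nonposOn_neg hf.apply_self hv hSv hcard).resolve_right⟩
  obtain ⟨w, hw, hSw, hwv⟩ := hS.exists_vertex_ne hv
  have hle := h w (R.mink_vertex_nonpos w hw) hSw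
  have hge := h' w (R.mink_vertex_nonpos w hw) hSw
  rw [LinearMap.neg_apply] at hge
  exact hf.apply_vertex w hw hwv (by linarith)

theorem vertexSum_of_edge (hv : v ∈ R.idealVertices) (hS : R.IsFace S)
    (hSv : S ⊆ R.facetsAt v) (hcard : S.card + 1 = n) :
    R.vertexSum f v S = if R.NonposOn f S then (-1) ^ S.card else 0 := by
  have hfilter : ({T | R.IsFace T ∧ S ⊆ T ∧ T ⊆ R.facetsAt v ∧ R.NonposOn f T} :
      Finset (Finset ι)) = ({S} : Finset (Finset ι)).filter (R.NonposOn f) := by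
    ext T
    simp only [Finset.mem_filter, Finset.mem_univ, true_and, Finset.mem_singleton]
    constructor
    · rintro ⟨hT, hST, hTv, hnonpos⟩
      have := hT.card_lt_of_ideal hv hTv
      exact ⟨(Finset.eq_of_subset_of_card_le hST (by lia)).symm, hnonpos⟩
    · rintro ⟨rfl, hnonpos⟩
      exact ⟨hS, subset_rfl, hSv, hnonpos⟩
  rw [vertexSum, hfilter, Finset.sum_filter, Finset.sum_singleton]

theorem IsFace.exists_isOpposite_nonneg_nonpos (hS : R.IsFace S) (hf : f v = 0)
    (hv : v ∈ R.idealVertices) (hSv : S ⊆ R.facetsAt v) (hcard : S.card + 1 < n) :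
    ∃ i o, R.IsOpposite v i o ∧ i ∈ R.adjacent S ∧ o ∈ R.adjacent S ∧
      0 ≤ f (R.normal i) ∧ f (R.normal o) ≤ 0 := by
  obtain ⟨i, hi⟩ := hS.adjacentAt_nonempty hv hSv hcard
  obtain ⟨hiv, hiS⟩ := mem_adjacentAt.mp hi
  obtain ⟨o, ho⟩ := exists_isOpposite hv hiv
  have hoS := ho.adjacent_of_adjacent hv hSv hiS
  obtain ⟨c, -, hc⟩ := ho.exists_add_eq_smul hv
  have hsum : f (R.normal i) + f (R.normal o) = 0 := by
    rw [← map_add, hc, map_smul, hf, smul_zero]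
  rcases le_total 0 (f (R.normal i)) with h | h
  · exact ⟨i, o, ho, hiS, hoS, h, by linarith⟩
  · exact ⟨o, i, ho.symm, hoS, hiS, by linarith, h⟩

theorem vertexSum_eq_insert_of_ideal (hv : v ∈ R.idealVertices) (hio : R.IsOpposite v i o)
    (hi : i ∈ R.adjacent S) (hfi : 0 ≤ f (R.normal i)) :
    R.vertexSum f v S = R.vertexSum f v (insert o S) := by
  have hiS := notMem_of_mem_adjacent hi
  rw [vertexSum_eq_add o S, add_eq_left]
  refine sum_neg_one_pow_card_eq_zero _ i fun T hiT => ?_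
  rw [Finset.insert_subset_iff, Finset.subset_insert_iff_of_notMem hiS, Finset.mem_insert]
  constructor
  · rintro ⟨⟨hT, hST, ⟨-, hTv⟩, hnonpos⟩, hoT⟩
    exact ⟨⟨hT.mono (Finset.subset_insert _ _), hST, hTv,
      (nonposOn_insert_iff hfi hT).mp hnonpos⟩, fun h => hoT (Or.inr h)⟩
  · rintro ⟨⟨hT, hST, hTv, hnonpos⟩, hoT⟩
    have hface : R.IsFace (insert i T) := hT.insert_of_orthogonal fun j hj => by
      rw [mink_comm]
      exact hio.mink_normal_eq_zero hv (hTv hj) (ne_of_mem_of_not_mem hj hiT)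
        (ne_of_mem_of_not_mem hj hoT)
    exact ⟨⟨hface, hST, ⟨hio.1, hTv⟩, (nonposOn_insert_iff hfi hface).mpr hnonpos⟩,
      fun h => h.elim hio.ne.symm hoT⟩

theorem vertexSum_of_ideal (hf : R.GenericAt f v) (hv : v ∈ R.idealVertices) (hS : R.IsFace S)
    (hSv : S ⊆ R.facetsAt v) :
    R.vertexSum f v S = (if R.NonposOn (-f) S then (-1) ^ n else 0) - (-1) ^ n := by
  obtain ⟨d, hd⟩ := Nat.exists_eq_add_of_lt (hS.card_lt_of_ideal hv hSv)
  induction d generalizing S with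
  | zero =>
    have hpow : (-1 : ℤ) ^ n = -(-1) ^ S.card := by
      rw [hd, add_zero, pow_succ]
      ring
    rw [vertexSum_of_edge hv hS hSv (by lia),
      if_congr (nonposOn_iff_not_nonposOn_neg hf hv hS hSv (by lia)) rfl rfl, ite_not, hpow]
    split_ifs
    · rw [sub_self]
    · rw [zero_sub, neg_neg]
  | succ d ih =>
    obtain ⟨i, o, hio, hi, ho, hfi, hfo⟩ :=
      hS.exists_isOpposite_nonneg_nonpos hf.apply_self hv hSv (by lia)
    have hface := hS.insert_of_mem_adjacent ho
    rw [vertexSum_eq_insert_of_ideal hv hio hi hfi,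
      ih hface (Finset.insert_subset hio.2.1 hSv) (by rw [card_insert_of_mem_adjacent ho]; lia),
      if_congr (nonposOn_insert_iff (by rw [LinearMap.neg_apply]; linarith) hface) rfl rfl]

/-! #### Summing over the vertices -/

theorem GenericHeight.card_top_vertices (hl : R.GenericHeight l) (hS : R.IsFace S) :
    {v ∈ R.vertices | S ⊆ R.facetsAt v ∧ R.NonposOn (relHeight l v) S}.card = 1 := by
  obtain ⟨v₀, hv₀⟩ := hS.exists_vertex
  obtain ⟨v, hv, hmax⟩ := Finset.exists_max_image {v ∈ R.vertices | S ⊆ R.facetsAt v} l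
    ⟨v₀, Finset.mem_filter.mpr hv₀⟩
  obtain ⟨hvV, hSv⟩ := Finset.mem_filter.mp hv
  refine Finset.card_eq_one.mpr ⟨v, Finset.ext fun w => ?_⟩
  rw [Finset.mem_filter, Finset.mem_singleton]
  constructor
  · rintro ⟨hw, hSw, hnonpos⟩
    have hle := hnonpos v (R.mink_vertex_nonpos v hvV) hSv
    have hge := hmax w (Finset.mem_filter.mpr ⟨hw, hSw⟩)
    rw [relHeight_vertex hvV] at hle
    by_contra hwv
    exact (hl v hvV).apply_vertex w hw hwv (by rw [relHeight_vertex hw]; linarith)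
  · rintro rfl
    refine ⟨hvV, hSv, fun x => linear_nonpos_on_face fun u hu hSu => ?_⟩
    rw [relHeight_vertex hu, sub_nonpos]
    exact hmax u (Finset.mem_filter.mpr ⟨hu, hSu⟩)

theorem GenericHeight.sum_vertexSum (hl : R.GenericHeight l) (S : Finset ι) :
    ∑ T with R.IsFace T ∧ S ⊆ T, (-1 : ℤ) ^ T.card =
      ∑ v ∈ R.vertices, R.vertexSum (relHeight l v) v S := by
  have hone : ∀ T ∈ ({T | R.IsFace T ∧ S ⊆ T} : Finset (Finset ι)), (-1 : ℤ) ^ T.card =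
      ∑ v ∈ R.vertices,
        if T ⊆ R.facetsAt v ∧ R.NonposOn (relHeight l v) T then (-1 : ℤ) ^ T.card else 0 := by
    intro T hT
    rw [← Finset.sum_filter, Finset.sum_const,
      hl.card_top_vertices (Finset.mem_filter.mp hT).2.1, one_smul]
  rw [Finset.sum_congr rfl hone, Finset.sum_comm]
  refine Finset.sum_congr rfl fun v _ => ?_
  simp only [← Finset.sum_filter, Finset.filter_filter, vertexSum, and_assoc]

theorem GenericHeight.vertexSum_eq (hl : R.GenericHeight l) (hS : R.IsFace S)
    (hv : v ∈ R.vertices) : R.vertexSum (relHeight l v) v S =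
      (if S ⊆ R.facetsAt v ∧ R.NonposOn (relHeight (-l) v) S then (-1) ^ n else 0) -
        if mink v v = 0 ∧ S ⊆ R.facetsAt v then (-1) ^ n else 0 := by
  rw [relHeight_neg]
  by_cases hSv : S ⊆ R.facetsAt v
  · by_cases hvv : mink v v = 0
    · rw [vertexSum_of_ideal (hl v hv) (mem_idealVertices.mpr ⟨hv, hvv⟩) hS hSv]
      simp only [hSv, hvv, true_and, if_true]
    · rw [vertexSum_of_timelike (hl v hv) hv ((vertex_causal hv).lt_of_ne hvv) hSv]
      simp only [hSv, hvv, true_and, false_and, if_false, sub_zero]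
  · simp only [hSv, false_and, and_false, if_false, sub_zero, vertexSum]
    refine Finset.sum_eq_zero fun T hT => ?_
    obtain ⟨-, -, hST, hTv, -⟩ := Finset.mem_filter.mp hT
    exact absurd (hST.trans hTv) hSv

theorem IsFace.sum_neg_one_pow_card (hS : R.IsFace S) :
    ∑ T with R.IsFace T ∧ S ⊆ T, (-1 : ℤ) ^ T.card = (-1) ^ n * (1 - R.idealCount S) := by
  obtain ⟨l, hl⟩ := R.exists_genericHeight
  rw [hl.sum_vertexSum, Finset.sum_congr rfl fun v hv => hl.vertexSum_eq hS hv,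
    Finset.sum_sub_distrib, ← Finset.sum_filter, ← Finset.sum_filter, Finset.sum_const,
    Finset.sum_const, hl.neg.card_top_vertices hS, idealCount, idealVertices,
    Finset.filter_filter]
  simp only [nsmul_eq_mul, Nat.cast_one, one_mul]
  ring

/-! ### Counting faces -/

variable (R) in
/-- The `k`-dimensional faces of the face `S`. A finite vertex is a face with `n` facets; ideal
vertices are not included. -/
def faces (k : ℕ) (S : Finset ι) : Finset (Finset ι) := {T | R.IsFace T ∧ S ⊆ T ∧ T.card + k = n}

variable (R) in
/-- The number of `k`-dimensional faces of the face `S`, ideal vertices not being counted. -/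
def faceCount (k : ℕ) (S : Finset ι) : ℕ := (R.faces k S).card

variable {d k : ℕ}

theorem mem_faces : T ∈ R.faces k S ↔ R.IsFace T ∧ S ⊆ T ∧ T.card + k = n := by
  rw [faces, Finset.mem_filter_univ]

theorem card_insert_add (hj : j ∈ R.adjacent S) (hd : S.card + (d + 1) = n) :
    (insert j S).card + d = n := by
  rw [card_insert_of_mem_adjacent hj]
  lia

theorem IsFace.faceCount_self (hS : R.IsFace S) (hd : S.card + d = n) : R.faceCount d S = 1 := by
  refine Finset.card_eq_one.mpr ⟨S, Finset.ext fun T => ?_⟩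
  rw [mem_faces, Finset.mem_singleton]
  constructor
  · rintro ⟨-, hST, hT⟩
    exact (Finset.eq_of_subset_of_card_le hST (by lia)).symm
  · rintro rfl
    exact ⟨hS, subset_rfl, hd⟩

theorem IsFace.filter_mem_adjacent_eq_sdiff (hT : R.IsFace T) (hST : S ⊆ T) :
    {j ∈ R.adjacent S | j ∈ T} = T \ S := by
  ext j
  rw [Finset.mem_filter, Finset.mem_sdiff]
  exact ⟨fun h => ⟨h.2, notMem_of_mem_adjacent h.1⟩, fun h =>
    ⟨mem_adjacent_of_isFace_insert (hT.mono (Finset.insert_subset h.1 hST)) h.2, h.1⟩⟩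

theorem sum_faceCount_insert {c : ℕ} (h : S.card + c + k = n) :
    ∑ j ∈ R.adjacent S, R.faceCount k (insert j S) = c * R.faceCount k S := by
  have hcount : ∀ j, R.faceCount k (insert j S) =
      ((R.faces k S).bipartiteAbove (fun j T => j ∈ T) j).card := by
    intro j
    refine congrArg Finset.card (Finset.ext fun T => ?_)
    rw [Finset.mem_bipartiteAbove, mem_faces, mem_faces, Finset.insert_subset_iff]
    tauto
  simp only [hcount]
  rw [Finset.sum_card_bipartiteAbove_eq_sum_card_bipartiteBelow,
    Finset.sum_const_nat (m := c), faceCount, mul_comm]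
  intro T hT
  obtain ⟨hT, hST, hcard⟩ := mem_faces.mp hT
  rw [Finset.bipartiteBelow, hT.filter_mem_adjacent_eq_sdiff hST, Finset.card_sdiff_of_subset hST]
  lia

theorem IsFace.faceCount_eq_card_adjacent (hS : R.IsFace S) (hd : S.card + (d + 1) = n) :
    R.faceCount d S = (R.adjacent S).card := by
  rw [← one_mul (R.faceCount d S), ← sum_faceCount_insert (by lia), Finset.card_eq_sum_ones]
  exact Finset.sum_congr rfl fun j hj =>
    (hS.insert_of_mem_adjacent hj).faceCount_self (card_insert_add hj hd)

theorem IsFace.sum_idealCount_insert (hS : R.IsFace S) (hd : S.card + d + 1 = n) :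
    ∑ j ∈ R.adjacent S, R.idealCount (insert j S) = 2 * d * R.idealCount S := by
  have hcount : ∀ j, R.idealCount (insert j S) =
      ({v ∈ R.idealVertices | S ⊆ R.facetsAt v}.bipartiteAbove
        (fun j v => j ∈ R.facetsAt v) j).card := by
    intro j
    rw [idealCount, Finset.bipartiteAbove, Finset.filter_filter]
    simp only [Finset.insert_subset_iff, and_comm]
  simp only [hcount]
  rw [Finset.sum_card_bipartiteAbove_eq_sum_card_bipartiteBelow,
    Finset.sum_const_nat (m := 2 * d), idealCount, mul_comm]
  intro v hv
  obtain ⟨hv, hSv⟩ := Finset.mem_filter.mp hv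
  rw [← hS.card_adjacentAt_of_ideal hv hSv hd, adjacentAt, Finset.inter_comm,
    Finset.bipartiteBelow, Finset.filter_mem_eq_inter]

theorem idealCount_mono (h : S ⊆ T) : R.idealCount T ≤ R.idealCount S :=
  Finset.card_le_card (Finset.monotone_filter_right _ fun _ _ => h.trans)

theorem IsFace.sum_neg_one_pow_mul_faceCount (hS : R.IsFace S) (hd : S.card + d = n) :
    ∑ k ∈ Finset.range (d + 1), (-1 : ℤ) ^ k * R.faceCount k S + R.idealCount S = 1 := by
  have hmaps : ∀ T ∈ ({T | R.IsFace T ∧ S ⊆ T} : Finset (Finset ι)),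
      n - T.card ∈ Finset.range (d + 1) := by
    intro T hT
    have := Finset.card_le_card (Finset.mem_filter.mp hT).2.2
    rw [Finset.mem_range]
    lia
  have hfiber : ∀ k, {T ∈ ({T | R.IsFace T ∧ S ⊆ T} : Finset (Finset ι)) | n - T.card = k} =
      R.faces k S := by
    intro k
    ext T
    rw [Finset.mem_filter, Finset.mem_filter_univ, mem_faces, and_assoc]
    refine and_congr_right fun hT => and_congr_right fun _ => ?_
    have := hT.card_le
    lia
  have hsign : ∀ k, ∀ T ∈ R.faces k S, (-1 : ℤ) ^ T.card = (-1) ^ n * (-1) ^ k := by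
    intro k T hT
    rw [← (mem_faces.mp hT).2.2, ← pow_add, add_assoc, pow_add, Even.neg_one_pow ⟨k, rfl⟩, mul_one]
  have heuler := hS.sum_neg_one_pow_card
  rw [← Finset.sum_fiberwise_of_maps_to hmaps] at heuler
  simp only [hfiber, Finset.sum_congr rfl (hsign _), Finset.sum_const, nsmul_eq_mul,
    mul_left_comm _ ((-1 : ℤ) ^ n), ← Finset.mul_sum] at heuler
  rw [add_comm, ← eq_sub_iff_add_eq', ← mul_left_cancel₀ (pow_ne_zero n (by norm_num)) heuler]
  exact Finset.sum_congr rfl fun k _ => mul_comm _ _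

/-! ### Linear relations between the face numbers -/

theorem IsFace.edge_relation (hS : R.IsFace S) (hd : S.card + 1 = n) :
    R.faceCount 0 S + R.idealCount S = 2 := by
  have h := hS.sum_neg_one_pow_mul_faceCount hd
  simp only [Finset.sum_range_succ, Finset.sum_range_zero, hS.faceCount_self hd] at h
  lia

theorem IsFace.polygon_relation (hS : R.IsFace S) (hd : S.card + 2 = n) :
    R.faceCount 0 S + R.idealCount S = R.faceCount 1 S := by
  have h := hS.sum_neg_one_pow_mul_faceCount hd
  simp only [Finset.sum_range_succ, Finset.sum_range_zero, hS.faceCount_self hd] at h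
  lia

theorem IsFace.polyhedron_relation (hS : R.IsFace S) (hd : S.card + 3 = n) :
    R.faceCount 0 S + R.faceCount 2 S + R.idealCount S = R.faceCount 1 S + 2 := by
  have h := hS.sum_neg_one_pow_mul_faceCount hd
  simp only [Finset.sum_range_succ, Finset.sum_range_zero, hS.faceCount_self hd] at h
  lia

theorem IsFace.polytope_relation (hS : R.IsFace S) (hd : S.card + 5 = n) :
    R.faceCount 0 S + R.faceCount 2 S + R.faceCount 4 S + R.idealCount S =
      R.faceCount 1 S + R.faceCount 3 S + 2 := by
  have h := hS.sum_neg_one_pow_mul_faceCount hd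
  simp only [Finset.sum_range_succ, Finset.sum_range_zero, hS.faceCount_self hd] at h
  lia

/-! ### Polygons -/

/-- Otherwise the normals of two opposite sides would add up to a null vector in the span of the
vertex between two other sides. -/
theorem IsFace.not_quadrilateral (hS : R.IsFace S) (hd : S.card + 2 = n) {a b c d : ι}
    (ha : a ∈ R.adjacent S) (hc : c ∈ R.adjacent S) (hb : b ∈ R.adjacent (insert a S))
    (hac : mink (R.normal a) (R.normal c) ≤ -1) (hbd : mink (R.normal b) (R.normal d) ≤ -1)
    (hcb : mink (R.normal c) (R.normal b) = 0) (had : mink (R.normal a) (R.normal d) = 0)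
    (hcd : mink (R.normal c) (R.normal d) = 0) : False := by
  have hab := mem_adjacent.mp hb a (Finset.mem_insert_self a S)
  have hnull : mink (R.normal a + R.normal c) (R.normal a + R.normal c) = 0 := by
    refine (normal_add_normal_causal hac).antisymm (not_lt.mp fun hlt => ?_)
    refine (mink_self_pos_of_orthogonal hlt (R.normal_add_normal_ne_zero b d) ?_).not_ge
      (normal_add_normal_causal hbd)
    rw [mink_comm, mink_add_left, mink_add_right, mink_add_right, hab, had, hcb, hcd]
    ring
  have hgram : mink (R.normal a) (R.normal c) = -1 := by
    rw [R.mink_normal_add_normal_self] at hnull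
    linarith
  have haS := hS.insert_of_mem_adjacent ha
  refine ((haS.insert_of_mem_adjacent hb).card_lt_of_null (R.normal_add_normal_ne_zero a c) hnull
    (mem_faceSpan.mpr fun i hi => ?_)).ne ?_
  · rw [mink_add_right]
    obtain rfl | hi := Finset.mem_insert.mp hi
    · rw [mink_comm, hab, mink_comm, hcb, add_zero]
    obtain rfl | hi := Finset.mem_insert.mp hi
    · rw [R.mink_normal_self, hgram, add_neg_cancel]
    · rw [mem_adjacent.mp ha i hi, mem_adjacent.mp hc i hi, add_zero]
  · rw [card_insert_of_mem_adjacent hb, card_insert_of_mem_adjacent ha, hd]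

theorem adjacent_insert_subset (S : Finset ι) (j : ι) :
    R.adjacent (insert j S) ⊆ R.adjacent S := fun _ hi =>
  mem_adjacent.mpr fun k hk => mem_adjacent.mp hi k (Finset.mem_insert_of_mem hk)

theorem mem_adjacent_insert :
    i ∈ R.adjacent (insert j S) ↔ mink (R.normal j) (R.normal i) = 0 ∧ i ∈ R.adjacent S := by
  simp only [mem_adjacent, Finset.forall_mem_insert]

theorem IsFace.adjacent_nonempty (hS : R.IsFace S) (hcard : S.card + 1 < n) :
    (R.adjacent S).Nonempty := by
  obtain ⟨v, hv, hSv⟩ := hS.exists_vertex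
  by_cases hvv : mink v v = 0
  · exact (hS.adjacentAt_nonempty (mem_idealVertices.mpr ⟨hv, hvv⟩) hSv hcard).mono
      Finset.inter_subset_right
  · have hlt := (vertex_causal hv).lt_of_ne hvv
    obtain ⟨i, hi, hiS⟩ := Finset.exists_mem_notMem_of_card_lt_card (s := S) (t := R.facetsAt v)
      (by rw [card_facetsAt_of_timelike hv hlt]; lia)
    exact ⟨i, mem_adjacent_of_isFace_insert
      ((isFace_facetsAt_of_timelike hlt).mono (Finset.insert_subset hi hSv)) hiS⟩

theorem idealCount_insert_le (hj : j ∈ R.adjacent S) :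
    R.idealCount (insert j S) ≤
      {i ∈ R.adjacent S | mink (R.normal j) (R.normal i) = -1}.card := by
  refine Finset.card_le_card_of_forall_subsingleton (fun v i => R.IsOpposite v j i) ?_ ?_
  · intro v hv
    obtain ⟨hv, hjSv⟩ := Finset.mem_filter.mp hv
    obtain ⟨hjv, hSv⟩ := Finset.insert_subset_iff.mp hjSv
    obtain ⟨i, hi⟩ := exists_isOpposite hv hjv
    exact ⟨i, Finset.mem_filter.mpr ⟨hi.adjacent_of_adjacent hv hSv hj, hi.2.2⟩, hi⟩
  · rintro i - v ⟨hv, hvi⟩ w ⟨hw, hwi⟩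
    have hv := (Finset.mem_filter.mp hv).1
    have hw := (Finset.mem_filter.mp hw).1
    exact IsOpposite.vertex_eq hv hw hvi hwi

/-- A facet `j` of the face `S`, the facets adjacent to it and the facets opposite to it at an ideal
vertex are distinct facets of `S`. -/
theorem one_add_card_adjacent_insert_add_idealCount_le (hj : j ∈ R.adjacent S) :
    1 + (R.adjacent (insert j S)).card + R.idealCount (insert j S) ≤ (R.adjacent S).card := by
  have hfilter : R.adjacent (insert j S) =
      {i ∈ R.adjacent S | mink (R.normal j) (R.normal i) = 0} := by
    ext i
    rw [mem_adjacent_insert, Finset.mem_filter, and_comm]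
  have hdisj : Disjoint (R.adjacent (insert j S))
      {i ∈ R.adjacent S | mink (R.normal j) (R.normal i) = -1} := by
    rw [hfilter]
    exact Finset.disjoint_filter.mpr fun i _ h => by rw [h]; norm_num
  have hnotMem : j ∉ R.adjacent (insert j S) ∪
      {i ∈ R.adjacent S | mink (R.normal j) (R.normal i) = -1} := by
    rw [hfilter, Finset.mem_union, Finset.mem_filter, Finset.mem_filter, R.mink_normal_self]
    norm_num
  have hle := Finset.card_le_card (Finset.insert_subset hj
    (Finset.union_subset (adjacent_insert_subset S j)
      (Finset.filter_subset (fun i => mink (R.normal j) (R.normal i) = -1) _)))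
  rw [Finset.card_insert_of_notMem hnotMem, Finset.card_union_of_disjoint hdisj] at hle
  have := idealCount_insert_le hj
  lia

theorem IsFace.card_adjacent_add_idealCount_of_edge (hS : R.IsFace S) (hd : S.card + 1 = n) :
    (R.adjacent S).card + R.idealCount S = 2 := by
  rw [← hS.faceCount_eq_card_adjacent hd, hS.edge_relation hd]

theorem IsFace.three_le_card_adjacent (hS : R.IsFace S) (hd : S.card + 2 = n) :
    3 ≤ (R.adjacent S).card := by
  obtain ⟨j, hj⟩ := hS.adjacent_nonempty (by lia)
  have hle := one_add_card_adjacent_insert_add_idealCount_le hj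
  have hedge := (hS.insert_of_mem_adjacent hj).card_adjacent_add_idealCount_of_edge
    (card_insert_add hj hd)
  lia

theorem IsFace.not_triangle (hS : R.IsFace S) (hd : S.card + 2 = n) {a b c : ι}
    (ha : a ∈ R.adjacent S) (hb : b ∈ R.adjacent (insert a S)) (hc : c ∈ R.adjacent (insert a S)) :
    mink (R.normal b) (R.normal c) ≠ 0 := by
  intro hbc
  have hc := mem_adjacent_insert.mpr ⟨hbc, hc⟩
  have hle := (((hS.insert_of_mem_adjacent ha).insert_of_mem_adjacent hb).insert_of_mem_adjacent
    hc).card_le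
  rw [card_insert_of_mem_adjacent hc, card_insert_of_mem_adjacent hb,
    card_insert_of_mem_adjacent ha] at hle
  lia

theorem IsFace.mink_le_neg_one_of_path (hS : R.IsFace S) (hd : S.card + 2 = n) {a b c : ι}
    (ha : a ∈ R.adjacent S) (hb : b ∈ R.adjacent (insert a S)) (hc : c ∈ R.adjacent (insert b S))
    (hca : c ≠ a) : mink (R.normal a) (R.normal c) ≤ -1 := by
  obtain ⟨hab, hbS⟩ := mem_adjacent_insert.mp hb
  exact (R.mink_normal a c hca.symm).resolve_left
    (hS.not_triangle hd hbS (mem_adjacent_insert.mpr ⟨by rwa [mink_comm], ha⟩) hc)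

theorem IsFace.card_adjacent_insert_add_idealCount_ge (hS : R.IsFace S) (hd : S.card + 2 = n)
    (hj : j ∈ R.adjacent S) : 2 ≤ (R.adjacent (insert j S)).card + R.idealCount S := by
  have hedge := (hS.insert_of_mem_adjacent hj).card_adjacent_add_idealCount_of_edge
    (card_insert_add hj hd)
  have := idealCount_mono (R := R) (Finset.subset_insert j S)
  lia

theorem IsFace.exists_ne_adjacent (hS : R.IsFace S) (hd : S.card + 2 = n) (hi : R.idealCount S = 0)
    {a b : ι} (hb : b ∈ R.adjacent S) :
    ∃ c ∈ R.adjacent (insert b S), c ≠ a :=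
  Finset.exists_mem_ne (by linarith [hS.card_adjacent_insert_add_idealCount_ge hd hb]) a

/-- The path `c - b - a - d - e` of adjacent sides does not close up to a quadrilateral. -/
theorem IsFace.five_le_card_adjacent (hS : R.IsFace S) (hd : S.card + 2 = n)
    (hi : R.idealCount S = 0) : 5 ≤ (R.adjacent S).card := by
  obtain ⟨a, ha⟩ := hS.adjacent_nonempty (by lia)
  obtain ⟨b, hb, -⟩ := hS.exists_ne_adjacent hd hi (a := a) ha
  obtain ⟨d, hd', hdb⟩ := hS.exists_ne_adjacent hd hi (a := b) ha
  obtain ⟨hab, hbS⟩ := mem_adjacent_insert.mp hb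
  obtain ⟨had, hdS⟩ := mem_adjacent_insert.mp hd'
  obtain ⟨c, hc, hca⟩ := hS.exists_ne_adjacent hd hi (a := a) hbS
  obtain ⟨e, he, hea⟩ := hS.exists_ne_adjacent hd hi (a := a) hdS
  obtain ⟨hbc, hcS⟩ := mem_adjacent_insert.mp hc
  obtain ⟨hde, heS⟩ := mem_adjacent_insert.mp he
  have hbd : mink (R.normal b) (R.normal d) ≤ -1 :=
    (R.mink_normal b d hdb.symm).resolve_left (hS.not_triangle hd ha hb hd')
  have hac := hS.mink_le_neg_one_of_path hd ha hb hc hca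
  have hae := hS.mink_le_neg_one_of_path hd ha hd' he hea
  have hce : c ≠ e := by
    rintro rfl
    exact hS.not_quadrilateral hd ha hcS hb hac hbd (by rwa [mink_comm]) had (by rwa [mink_comm])
  have hbe : b ≠ e := by
    rintro rfl
    linarith
  have hcd : c ≠ d := by
    rintro rfl
    linarith
  have hcard : ({a, b, c, d, e} : Finset ι).card = 5 := by
    simp [ne_of_mink_normal_nonpos hab.le, hca.symm, ne_of_mink_normal_nonpos had.le, hea.symm,
      ne_of_mink_normal_nonpos hbc.le, hdb.symm, hbe, hcd, hce, ne_of_mink_normal_nonpos hde.le]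
  rw [← hcard]
  refine Finset.card_le_card ?_
  simp only [Finset.insert_subset_iff, Finset.singleton_subset_iff]
  exact ⟨ha, hbS, hcS, hdS, heS⟩

theorem IsFace.notMem_adjacent_of_isOpposite (hS : R.IsFace S) (hd : S.card + 2 = n)
    (hv : v ∈ R.idealVertices) (hSv : S ⊆ R.facetsAt v) (ho : R.IsOpposite v i o)
    (hi : i ∈ R.adjacent S) (hj : j ∈ R.adjacent (insert i S)) :
    j ∉ R.adjacent (insert o S) := by
  intro hjo
  obtain ⟨hij, -⟩ := mem_adjacent_insert.mp hj
  obtain ⟨hoj, -⟩ := mem_adjacent_insert.mp hjo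
  obtain ⟨c, hc₀, hc⟩ := ho.exists_add_eq_smul hv
  have hjv : mink (R.normal j) (c • v) = 0 := by
    rw [← hc, mink_comm, mink_add_left, hij, hoj, add_zero]
  rw [mink_smul_right] at hjv
  have hjv := mem_facetsAt.mpr ((mul_eq_zero.mp hjv).resolve_left hc₀)
  have hlt := ((hS.insert_of_mem_adjacent hi).insert_of_mem_adjacent hj).card_lt_of_ideal hv
    (Finset.insert_subset hjv (Finset.insert_subset ho.1 hSv))
  rw [card_insert_of_mem_adjacent hj, card_insert_of_mem_adjacent hi] at hlt
  lia

theorem IsFace.four_le_card_adjacent (hS : R.IsFace S) (hd : S.card + 2 = n)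
    (hi : R.idealCount S = 1) : 4 ≤ (R.adjacent S).card := by
  obtain ⟨v, hv⟩ := Finset.card_pos.mp (hi.ge : 0 < R.idealCount S)
  obtain ⟨hv, hSv⟩ := Finset.mem_filter.mp hv
  obtain ⟨i, hiv⟩ := hS.adjacentAt_nonempty hv hSv (by lia)
  obtain ⟨hiv, hiS⟩ := mem_adjacentAt.mp hiv
  obtain ⟨o, ho⟩ := exists_isOpposite hv hiv
  have hoS := ho.adjacent_of_adjacent hv hSv hiS
  have hneighbour (j) (hj : j ∈ R.adjacent S) : (R.adjacent (insert j S)).Nonempty :=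
    Finset.card_pos.mp (by linarith [hS.card_adjacent_insert_add_idealCount_ge hd hj])
  obtain ⟨b, hb⟩ := hneighbour i hiS
  obtain ⟨d, hd'⟩ := hneighbour o hoS
  have hbd : b ≠ d := by
    rintro rfl
    exact hS.notMem_adjacent_of_isOpposite hd hv hSv ho hiS hb hd'
  obtain ⟨hib, hbS⟩ := mem_adjacent_insert.mp hb
  obtain ⟨hod, hdS⟩ := mem_adjacent_insert.mp hd'
  have hio := ho.2.2
  have hob : o ≠ b := by
    rintro rfl
    linarith
  have hid : i ≠ d := by
    rintro rfl
    rw [mink_comm] at hod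
    linarith
  have hcard : ({i, o, b, d} : Finset ι).card = 4 := by
    simp [ho.ne, ne_of_mink_normal_nonpos hib.le, hid, hob, ne_of_mink_normal_nonpos hod.le, hbd]
  rw [← hcard]
  refine Finset.card_le_card ?_
  simp only [Finset.insert_subset_iff, Finset.singleton_subset_iff]
  exact ⟨hiS, hoS, hbS, hdS⟩

theorem IsFace.polygon_bound (hS : R.IsFace S) (hd : S.card + 2 = n) :
    5 ≤ R.faceCount 0 S + 2 * R.idealCount S := by
  have hrel := hS.polygon_relation hd
  rw [hS.faceCount_eq_card_adjacent hd] at hrel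
  have h3 := hS.three_le_card_adjacent hd
  have h4 := hS.four_le_card_adjacent hd
  have h5 := hS.five_le_card_adjacent hd
  lia

/-! ### Summing over the facets of a face -/

/-- Every vertex lies on `d + 1` edges if it is finite and on `2 ^ d` edges if it is ideal. -/
theorem IsFace.edges_relation (hS : R.IsFace S) (hd : S.card + (d + 1) = n) :
    (d + 1) * R.faceCount 0 S + 2 ^ d * R.idealCount S = 2 * R.faceCount 1 S := by
  induction d generalizing S with
  | zero =>
    have := hS.edge_relation hd
    rw [hS.faceCount_self hd]
    lia
  | succ d ih =>
    have hsum := Finset.sum_congr rfl fun j hj =>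
      ih (hS.insert_of_mem_adjacent hj) (card_insert_add hj hd)
    simp only [Finset.sum_add_distrib, ← Finset.mul_sum, hS.sum_idealCount_insert hd,
      sum_faceCount_insert (show S.card + (d + 2) + 0 = n from hd),
      sum_faceCount_insert (show S.card + (d + 1) + 1 = n from hd)] at hsum
    refine Nat.eq_of_mul_eq_mul_left (show 0 < d + 1 by lia) ?_
    linear_combination hsum

theorem IsFace.polygons_relation (hS : R.IsFace S) (hd : S.card + (d + 2) = n) :
    10 * R.faceCount 2 S ≤
      (d + 2) * (d + 1) * R.faceCount 0 S + (d + 1) * 2 ^ (d + 2) * R.idealCount S := by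
  induction d generalizing S with
  | zero =>
    have := hS.polygon_bound hd
    rw [hS.faceCount_self hd]
    lia
  | succ d ih =>
    have hsum := Finset.sum_le_sum fun j hj =>
      ih (hS.insert_of_mem_adjacent hj) (card_insert_add hj hd)
    simp only [Finset.sum_add_distrib, ← Finset.mul_sum,
      hS.sum_idealCount_insert (show S.card + (d + 2) + 1 = n from hd),
      sum_faceCount_insert (show S.card + (d + 3) + 0 = n from hd),
      sum_faceCount_insert (show S.card + (d + 1) + 2 = n from hd)] at hsum
    refine Nat.le_of_mul_le_mul_left ?_ (show 0 < d + 1 by lia)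
    linear_combination hsum

theorem IsFace.polyhedra_relation (hS : R.IsFace S) (hd : S.card + (d + 3) = n) :
    12 * R.faceCount 3 S + 3 * (d + 2) * (d + 1) * R.faceCount 1 S =
      6 * (d + 1) * R.faceCount 2 S + (d + 3) * (d + 2) * (d + 1) * R.faceCount 0 S +
        3 * (d + 2) * (d + 1) * 2 ^ d * R.idealCount S := by
  induction d generalizing S with
  | zero =>
    have := hS.polyhedron_relation hd
    rw [hS.faceCount_self hd]
    lia
  | succ d ih =>
    have hsum := Finset.sum_congr rfl fun j hj =>
      ih (hS.insert_of_mem_adjacent hj) (card_insert_add hj hd)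
    simp only [Finset.sum_add_distrib, ← Finset.mul_sum,
      hS.sum_idealCount_insert (show S.card + (d + 3) + 1 = n from hd),
      sum_faceCount_insert (show S.card + (d + 4) + 0 = n from hd),
      sum_faceCount_insert (show S.card + (d + 3) + 1 = n from hd),
      sum_faceCount_insert (show S.card + (d + 2) + 2 = n from hd),
      sum_faceCount_insert (show S.card + (d + 1) + 3 = n from hd)] at hsum
    refine Nat.eq_of_mul_eq_mul_left (show 0 < d + 1 by lia) ?_
    linear_combination hsum

/-! ### Lower bounds for the number of facets -/

theorem IsFace.nine_le_card_adjacent_add_idealCount (hS : R.IsFace S) (hd : S.card + 3 = n) :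
    9 ≤ (R.adjacent S).card + R.idealCount S := by
  have heuler := hS.polyhedron_relation hd
  have hedges := hS.edges_relation hd
  have hpolygons := hS.polygons_relation hd
  rw [hS.faceCount_eq_card_adjacent hd] at heuler hpolygons
  by_contra! hlt
  have hfacet : ∀ j ∈ R.adjacent S, R.idealCount (insert j S) = 0 := by
    intro j hj
    have := one_add_card_adjacent_insert_add_idealCount_le hj
    have := (hS.insert_of_mem_adjacent hj).three_le_card_adjacent (card_insert_add hj hd)
    lia
  have hsum := hS.sum_idealCount_insert hd
  rw [Finset.sum_eq_zero hfacet] at hsum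
  lia

theorem IsFace.ten_le_card_adjacent (hS : R.IsFace S) (hd : S.card + 4 = n) :
    10 ≤ (R.adjacent S).card := by
  obtain ⟨j, hj⟩ := hS.adjacent_nonempty (by lia)
  have := one_add_card_adjacent_insert_add_idealCount_le hj
  have := (hS.insert_of_mem_adjacent hj).nine_le_card_adjacent_add_idealCount
    (card_insert_add hj hd)
  lia

theorem IsFace.sixteen_le_card_adjacent (hS : R.IsFace S) (hd : S.card + 5 = n)
    (hle : 5 * (R.adjacent S).card ≤ 7 * R.idealCount S + 10) : 16 ≤ (R.adjacent S).card := by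
  have hfacet : ∀ j ∈ R.adjacent S, 11 + R.idealCount (insert j S) ≤ (R.adjacent S).card := by
    intro j hj
    have := one_add_card_adjacent_insert_add_idealCount_le hj
    have := (hS.insert_of_mem_adjacent hj).ten_le_card_adjacent (card_insert_add hj hd)
    lia
  have hsum := Finset.sum_le_sum hfacet
  rw [Finset.sum_add_distrib, hS.sum_idealCount_insert hd, Finset.sum_const, Finset.sum_const,
    smul_eq_mul, smul_eq_mul] at hsum
  obtain ⟨j, hj⟩ := hS.adjacent_nonempty (by lia)
  have := hfacet j hj
  by_contra! hlt
  nlinarith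

theorem IsFace.twentySix_le_card_adjacent_add_idealCount (hS : R.IsFace S)
    (hd : S.card + 5 = n) : 26 ≤ (R.adjacent S).card + R.idealCount S := by
  have heuler := hS.polytope_relation hd
  have hedges := hS.edges_relation hd
  have hpolygons := hS.polygons_relation (d := 3) hd
  have hpolyhedra := hS.polyhedra_relation (d := 2) hd
  rw [hS.faceCount_eq_card_adjacent hd] at heuler
  have hle : 5 * (R.adjacent S).card ≤ 7 * R.idealCount S + 10 := by lia
  have := hS.sixteen_le_card_adjacent hd hle
  lia

end RightAngledSystem

theorem RightAngledSystem.twentySeven_le_card {ι : Type*} [Fintype ι]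
    (R : RightAngledSystem 6 ι) : 27 ≤ Fintype.card ι := by
  classical
  have hface : R.IsFace ∅ := isFace_empty
  obtain ⟨j, hj⟩ := hface.adjacent_nonempty (by simp)
  have := one_add_card_adjacent_insert_add_idealCount_le hj
  have := (hface.insert_of_mem_adjacent hj).twentySix_le_card_adjacent_add_idealCount
    (card_insert_add hj (by simp))
  have := (R.adjacent ∅).card_le_univ
  lia

/-! ### The Klein model as an affine hyperplane -/

section KleinModel

variable {n : ℕ} {x : MinkowskiSpace n}

/-- The inclusion of the Klein model's vector space as the hyperplane `x₀ = 0`. -/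
def horizontal : EuclideanSpace ℝ (Fin n) →ₗ[ℝ] MinkowskiSpace n where
  toFun d := Fin.cons 0 d.ofLp
  map_add' _ _ := ext_spatial (add_zero 0).symm rfl
  map_smul' c _ := ext_spatial (mul_zero c).symm rfl

@[simp]
theorem horizontal_zero (d : EuclideanSpace ℝ (Fin n)) : horizontal d 0 = 0 := rfl

@[simp]
theorem spatial_horizontal (d : EuclideanSpace ℝ (Fin n)) : spatial (horizontal d) = d := rfl

/-- The inclusion of the Klein model as the affine hyperplane `x₀ = 1`, a section of `kleinMap`. -/
def kleinLift : EuclideanSpace ℝ (Fin n) →ᵃ[ℝ] MinkowskiSpace n where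
  toFun y := Fin.cons 1 y.ofLp
  linear := horizontal
  map_vadd' _ _ := ext_spatial (zero_add 1).symm rfl

@[simp]
theorem kleinLift_zero (y : EuclideanSpace ℝ (Fin n)) : kleinLift y 0 = 1 := rfl

@[simp]
theorem spatial_kleinLift (y : EuclideanSpace ℝ (Fin n)) : spatial (kleinLift y) = y := rfl

theorem kleinLift_injective : Function.Injective (kleinLift (n := n)) :=
  Function.LeftInverse.injective (g := spatial) spatial_kleinLift

theorem horizontal_sub (y y' : EuclideanSpace ℝ (Fin n)) :
    horizontal (y - y') = kleinLift y - kleinLift y' :=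
  kleinLift.linearMap_vsub y y'

theorem finrank_comap_horizontal_add_one {W : Submodule ℝ (MinkowskiSpace n)} (hxW : x ∈ W)
    (hx : x 0 ≠ 0) : Module.finrank ℝ (W.comap horizontal) + 1 = Module.finrank ℝ W := by
  have hinj : Function.Injective (horizontal (n := n)) :=
    Function.LeftInverse.injective (g := spatial) spatial_horizontal
  have hrange : LinearMap.range (horizontal (n := n)) = LinearMap.ker (LinearMap.proj 0) := by
    refine le_antisymm ?_ fun x hx => ⟨spatial x, ext_spatial (Eq.symm hx) rfl⟩
    rintro _ ⟨d, rfl⟩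
    exact horizontal_zero d
  rw [(Submodule.equivMapOfInjective _ hinj _).finrank_eq, Submodule.map_comap_eq, hrange, inf_comm]
  exact finrank_inf_ker_add_one hxW hx

theorem kleinLift_sum {κ : Type*} {s : Finset κ} {w : κ → ℝ} (hw : ∑ k ∈ s, w k = 1)
    (y : κ → EuclideanSpace ℝ (Fin n)) :
    kleinLift (∑ k ∈ s, w k • y k) = ∑ k ∈ s, w k • kleinLift (y k) := by
  refine ext_spatial ?_ ?_
  · simp [Finset.sum_apply, hw]
  · simp only [spatial_kleinLift, map_sum, map_smul]

theorem mink_kleinLift (x : MinkowskiSpace n) (y : EuclideanSpace ℝ (Fin n)) :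
    mink x (kleinLift y) = inner ℝ (spatial x) y - x 0 := by
  rw [mink_eq_inner, kleinLift_zero, spatial_kleinLift, mul_one]

theorem mink_kleinLift_self (y : EuclideanSpace ℝ (Fin n)) :
    mink (kleinLift y) (kleinLift y) = ‖y‖ ^ 2 - 1 := by
  rw [mink_self_eq, kleinLift_zero, spatial_kleinLift, one_pow]

theorem kleinMap_smul_kleinLift {c : ℝ} (hc : c ≠ 0) (y : EuclideanSpace ℝ (Fin n)) :
    kleinMap (c • kleinLift y) = y := by
  ext i
  change c * y i / (c * 1) = y i
  rw [mul_one, mul_div_cancel_left₀ _ hc]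

theorem smul_kleinLift_kleinMap (hx : x 0 ≠ 0) : x 0 • kleinLift (kleinMap x) = x := by
  refine ext_spatial (mul_one _) ?_
  ext i
  exact mul_div_cancel₀ (x i.succ) hx

theorem smul_kleinMap (hx : x 0 ≠ 0) : x 0 • kleinMap x = spatial x :=
  congrArg spatial (smul_kleinLift_kleinMap hx)

theorem kleinLift_kleinMap_mem_iff {W : Submodule ℝ (MinkowskiSpace n)} (hx : x 0 ≠ 0) :
    kleinLift (kleinMap x) ∈ W ↔ x ∈ W := by
  conv_rhs => rw [← smul_kleinLift_kleinMap hx, W.smul_mem_iff hx]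

theorem mink_self_eq_sq_mul (hx : x 0 ≠ 0) : mink x x = x 0 ^ 2 * (‖kleinMap x‖ ^ 2 - 1) := by
  conv_lhs => rw [← smul_kleinLift_kleinMap hx]
  rw [mink_smul_left, mink_smul_right, mink_kleinLift_self]
  ring

theorem spatial_ne_zero_of_mink_self_pos (hx : 0 < mink x x) : spatial x ≠ 0 := by
  intro h
  rw [mink_self_eq, h, norm_zero] at hx
  nlinarith [sq_nonneg (x 0)]

end KleinModel

/-! ### The cone over a polyhedron -/

namespace HypPolyhedron

open Topology

variable {n : ℕ} (P : HypPolyhedron n)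

/-- The linear cone over a polyhedron. -/
def cone : Set (MinkowskiSpace n) := {x | ∀ i, mink (P.e i) x ≤ 0}

variable {P} {x y : MinkowskiSpace n} {c : ℝ}

theorem smul_mem_cone (hx : x ∈ P.cone) (hc : 0 ≤ c) : c • x ∈ P.cone := fun i => by
  rw [mink_smul_right]
  exact mul_nonpos_of_nonneg_of_nonpos hc (hx i)

theorem add_mem_cone (hx : x ∈ P.cone) (hy : y ∈ P.cone) : x + y ∈ P.cone := fun i => by
  rw [mink_add_right]
  exact add_nonpos (hx i) (hy i)

theorem smul_mem_cone_iff (hc : 0 < c) : c • x ∈ P.cone ↔ x ∈ P.cone := by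
  refine ⟨fun h => ?_, fun h => smul_mem_cone h hc.le⟩
  rw [← inv_smul_smul₀ hc.ne' x]
  exact smul_mem_cone h (inv_nonneg.mpr hc.le)

theorem kleinLift_kleinMap_mem_cone_iff (hx : 0 < x 0) :
    kleinLift (kleinMap x) ∈ P.cone ↔ x ∈ P.cone := by
  conv_rhs => rw [← smul_kleinLift_kleinMap hx.ne', smul_mem_cone_iff hx]

variable (P) in
theorem convex_cone : Convex ℝ P.cone := fun _ hx _ hy _ _ ha hb _ =>
  add_mem_cone (smul_mem_cone hx ha) (smul_mem_cone hy hb)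

variable (P) in
theorem isClosed_cone : IsClosed P.cone := by
  simp only [cone, Set.ofPred_forall]
  exact isClosed_iInter fun i => isClosed_le (continuous_mink_right _) continuous_const

variable (P) in
theorem kleinMap_image_carrier :
    kleinMap '' P.carrier = {y | ‖y‖ < 1 ∧ kleinLift y ∈ P.cone} := by
  ext y
  constructor
  · rintro ⟨x, ⟨⟨hxx, hx₀⟩, hx⟩, rfl⟩
    rw [mink_self_eq_sq_mul hx₀.ne'] at hxx
    refine ⟨?_, (kleinLift_kleinMap_mem_cone_iff hx₀).mpr hx⟩
    rw [← abs_norm, ← sq_lt_one_iff_abs_lt_one]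
    nlinarith [sq_nonneg (x 0)]
  · rintro ⟨hy, hmem⟩
    have hpos : 0 < 1 - ‖y‖ ^ 2 := by nlinarith [norm_nonneg y]
    have hc : 0 < (√(1 - ‖y‖ ^ 2))⁻¹ := inv_pos.mpr (Real.sqrt_pos.mpr hpos)
    refine ⟨(√(1 - ‖y‖ ^ 2))⁻¹ • kleinLift y, ⟨⟨?_, ?_⟩, smul_mem_cone hmem hc.le⟩,
      kleinMap_smul_kleinLift hc.ne' y⟩
    · rw [mink_smul_left, mink_smul_right, mink_kleinLift_self, ← mul_assoc, ← mul_inv,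
        Real.mul_self_sqrt hpos.le, inv_mul_eq_iff_eq_mul₀ hpos.ne']
      ring
    · simpa using hpos

variable (P) in
/-- A lift of an interior point of the polyhedron. -/
def center : MinkowskiSpace n := kleinLift P.nonempty_int.some

variable (P) in
theorem center_timelike : mink P.center P.center < 0 := by
  have h := P.kleinMap_image_carrier.subset (interior_subset P.nonempty_int.some_mem)
  rw [center, mink_kleinLift_self]
  nlinarith [h.1, norm_nonneg P.nonempty_int.some]

variable (P) in
theorem mink_center_neg (i : Fin P.m) : mink (P.e i) P.center < 0 := by
  have hint := P.nonempty_int.some_mem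
  refine ((P.kleinMap_image_carrier.subset (interior_subset hint)).2 i).lt_of_ne fun h₀ => ?_
  have hmax : IsLocalMax (innerSL ℝ (spatial (P.e i))) P.nonempty_int.some := by
    filter_upwards [mem_interior_iff_mem_nhds.mp hint] with y hy
    have hyi := (P.kleinMap_image_carrier.subset hy).2 i
    rw [mink_kleinLift] at hyi h₀
    simp only [innerSL_apply_apply]
    linarith
  have hzero := hmax.hasFDerivAt_eq_zero (ContinuousLinearMap.hasFDerivAt _)
  refine spatial_ne_zero_of_mink_self_pos ((P.unit i).symm ▸ one_pos) ?_
  rw [← inner_self_eq_zero (𝕜 := ℝ), ← innerSL_apply_apply, hzero, zero_apply]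

theorem center_mem_cone : P.center ∈ P.cone := fun i => (P.mink_center_neg i).le

variable (P) in
theorem cl_eq : P.cl = {y | ‖y‖ ≤ 1 ∧ kleinLift y ∈ P.cone} := by
  have hball : {y | ‖y‖ ≤ 1 ∧ kleinLift y ∈ P.cone} =
      Metric.closedBall 0 1 ∩ kleinLift ⁻¹' P.cone := by
    ext y
    simp
  rw [cl, kleinMap_image_carrier, hball]
  refine (closure_minimal ?_ ?_).antisymm ?_
  · exact fun y hy => ⟨mem_closedBall_zero_iff.mpr hy.1.le, hy.2⟩
  · exact Metric.isClosed_closedBall.inter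
      (P.isClosed_cone.preimage kleinLift.continuous_of_finiteDimensional)
  have hconvex : Convex ℝ (Metric.closedBall 0 1 ∩ kleinLift ⁻¹' P.cone) :=
    (convex_closedBall 0 1).inter (P.convex_cone.affine_preimage kleinLift)
  refine subset_closure.trans (hconvex.closure_interior_eq_closure_of_nonempty_interior ?_ ▸
    closure_mono fun y hy => ?_)
  · refine P.nonempty_int.mono (interior_mono ?_)
    exact fun y hy => ⟨mem_closedBall_zero_iff.mpr (P.kleinMap_image_carrier.subset hy).1.le,
      (P.kleinMap_image_carrier.subset hy).2⟩
  · have hy' := interior_mono Set.inter_subset_left hy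
    rw [interior_closedBall _ one_ne_zero, mem_ball_zero_iff] at hy'
    exact ⟨hy', (interior_subset hy).2⟩

theorem kleinLift_mem_cone {y : EuclideanSpace ℝ (Fin n)} (hy : y ∈ P.cl) :
    kleinLift y ∈ P.cone :=
  (P.cl_eq.subset hy).2

variable (P) in
theorem verts_subset_cl : P.verts ⊆ P.cl := fun _ hv => hv.subset rfl

variable (P) in
theorem verts_subset_extremePoints : P.verts ⊆ Set.extremePoints ℝ P.cl := fun _ hv =>
  isExtreme_singleton.mp hv.isExtreme

namespace FiniteVolume

variable (hfv : P.FiniteVolume)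

include hfv

theorem extremePoints_subset_verts : Set.extremePoints ℝ P.cl ⊆ P.verts := by
  rw [hfv.2]
  exact extremePoints_convexHull_subset

theorem mem_verts_of_norm_eq_one {y : EuclideanSpace ℝ (Fin n)} (hy : y ∈ P.cl) (hy₁ : ‖y‖ = 1) :
    y ∈ P.verts := by
  have hext : y ∈ Set.extremePoints ℝ (Metric.closedBall (0 : EuclideanSpace ℝ (Fin n)) 1) :=
    StrictConvexSpace.sphere_subset_extremePoints_closedBall 0 one_ne_zero (by simpa using hy₁)
  have hsub : P.cl ⊆ Metric.closedBall 0 1 := fun z hz =>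
    mem_closedBall_zero_iff.mpr (P.cl_eq.subset hz).1
  exact hfv.extremePoints_subset_verts
    ⟨hy, fun a ha b hb hab => hext.2 (hsub ha) (hsub hb) hab⟩

theorem finite_faces (k : ℕ) : (P.faces k).Finite := by
  have hcompact : IsCompact P.cl := hfv.2 ▸ hfv.1.isCompact_convexHull (𝕜 := ℝ)
  have hconvex : Convex ℝ P.cl := hfv.2 ▸ convex_convexHull ℝ _
  refine Set.Finite.of_finite_image (f := Set.extremePoints ℝ) ?_ fun F hF G hG hFG => ?_
  · refine hfv.1.finite_subsets.subset ?_
    rintro _ ⟨F, hF, rfl⟩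
    exact hF.1.isExtreme.extremePoints_subset_extremePoints.trans hfv.extremePoints_subset_verts
  · rw [← closure_convexHull_extremePoints (hF.1.isCompact hcompact) (hF.1.convex hconvex),
      show Set.extremePoints ℝ F = Set.extremePoints ℝ G from hFG,
      closure_convexHull_extremePoints (hG.1.isCompact hcompact) (hG.1.convex hconvex)]

/-! ### Finite volume forces the cone to be causal -/

theorem exists_mink_kleinLift_nonneg (hn : 2 ≤ n) {z : EuclideanSpace ℝ (Fin n)} (hz : ‖z‖ = 1) :
    ∃ i, 0 ≤ mink (P.e i) (kleinLift z) := by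
  by_contra! hneg
  let S := Metric.sphere (0 : EuclideanSpace ℝ (Fin n)) 1
  have hzS : z ∈ S := mem_sphere_zero_iff_norm.mpr hz
  have hSconn : IsPreconnected S := by
    refine isPreconnected_sphere ?_ 0 1
    rw [← Module.finrank_eq_rank, finrank_euclideanSpace_fin]
    exact_mod_cast hn
  have hSnontrivial : S.Nontrivial := by
    refine ⟨z, hzS, -z, mem_sphere_zero_iff_norm.mpr (by rwa [norm_neg]), fun h => ?_⟩
    exact ne_neg_of_mem_unit_sphere ℝ ⟨z, hzS⟩ (Subtype.ext h)
  have hU : {w | ∀ i, mink (P.e i) (kleinLift w) < 0} ∈ 𝓝 z := by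
    refine IsOpen.mem_nhds ?_ hneg
    simp only [Set.ofPred_forall]
    exact isOpen_iInter_of_finite fun i => isOpen_lt
      ((continuous_mink_right _).comp kleinLift.continuous_of_finiteDimensional) continuous_const
  -- All points of the sphere near `z` would be ideal vertices.
  have hacc := (hSconn.preperfect_of_nontrivial hSnontrivial z hzS).nhds_inter hU
  refine Set.Infinite.of_accPt hacc (hfv.1.subset fun w hw => ?_)
  have hw₁ : ‖w‖ = 1 := mem_sphere_zero_iff_norm.mp hw.2
  exact hfv.mem_verts_of_norm_eq_one (P.cl_eq.superset ⟨hw₁.le, fun i => (hw.1 i).le⟩) hw₁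

theorem exists_mink_nonneg_of_null (hn : 2 ≤ n) (hx : mink x x = 0) (hx₀ : 0 < x 0) :
    ∃ i, 0 ≤ mink (P.e i) x := by
  have hnorm : ‖kleinMap x‖ = 1 := by
    rw [mink_self_eq_sq_mul hx₀.ne', mul_eq_zero_iff_left (by positivity), sub_eq_zero] at hx
    exact (pow_eq_one_iff_of_nonneg (norm_nonneg _) two_ne_zero).mp hx
  obtain ⟨i, hi⟩ := hfv.exists_mink_kleinLift_nonneg hn hnorm
  refine ⟨i, ?_⟩
  rw [← smul_kleinLift_kleinMap hx₀.ne', mink_smul_right]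
  exact mul_nonneg hx₀.le hi

theorem mink_self_nonpos (hn : 2 ≤ n) (hx : x ∈ P.cone) (hx₀ : 0 ≤ x 0) : mink x x ≤ 0 := by
  by_contra! hpos
  let z (t : ℝ) : MinkowskiSpace n := (1 - t) • P.center + t • x
  have hcont : Continuous fun t => mink (z t) (z t) := by
    simp only [z, mink]
    fun_prop
  obtain ⟨t, ⟨ht₀, ht₁⟩, ht⟩ := intermediate_value_Ioo zero_le_one hcont.continuousOn
    (show (0 : ℝ) ∈ _ by simpa [z] using ⟨P.center_timelike, hpos⟩)
  have hz₀ : 0 < z t 0 :=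
    add_pos_of_pos_of_nonneg (mul_pos (sub_pos.mpr ht₁) one_pos) (mul_nonneg ht₀.le hx₀)
  obtain ⟨i, hi⟩ := hfv.exists_mink_nonneg_of_null hn ht hz₀
  rw [mink_add_right, mink_smul_right, mink_smul_right] at hi
  nlinarith [P.mink_center_neg i, hx i]

theorem eq_zero_of_coord_zero (hn : 2 ≤ n) (hx : x ∈ P.cone) (hx₀ : x 0 = 0) : x = 0 :=
  eq_zero_of_causal_of_coord_zero (hfv.mink_self_nonpos hn hx hx₀.ge) hx₀

theorem coord_zero_pos (hn : 2 ≤ n) (hx : x ∈ P.cone) (hx_ne : x ≠ 0) : 0 < x 0 := by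
  by_contra! hx₀
  have hlt := hx₀.lt_of_ne fun h => hx_ne (hfv.eq_zero_of_coord_zero hn hx h)
  have : NeZero n := ⟨by omega⟩
  obtain ⟨z, hz⟩ := exists_norm_eq (EuclideanSpace ℝ (Fin n)) zero_le_one
  obtain ⟨i, -⟩ := hfv.exists_mink_kleinLift_nonneg hn hz
  have hc : 0 ≤ -x 0 := neg_nonneg.mpr hx₀
  have hsum : -x 0 • P.center + x = 0 :=
    hfv.eq_zero_of_coord_zero hn (add_mem_cone (smul_mem_cone center_mem_cone hc) hx) (by
      simp [center])
  have hi : mink (P.e i) (-x 0 • P.center + x) < 0 := by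
    rw [mink_add_right, mink_smul_right]
    nlinarith [P.mink_center_neg i, hx i]
  rw [hsum, mink_comm, mink_zero_left] at hi
  exact hi.false

theorem mem_cl_iff (hn : 2 ≤ n) {y : EuclideanSpace ℝ (Fin n)} :
    y ∈ P.cl ↔ kleinLift y ∈ P.cone := by
  refine ⟨kleinLift_mem_cone, fun hy => P.cl_eq.superset ⟨?_, hy⟩⟩
  have h := hfv.mink_self_nonpos hn hy zero_le_one
  rw [mink_kleinLift_self, sub_nonpos] at h
  exact (sq_le_one_iff₀ (norm_nonneg y)).mp h

theorem kleinMap_mem_cl (hn : 2 ≤ n) (hx : x ∈ P.cone) (hx_ne : x ≠ 0) : kleinMap x ∈ P.cl :=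
  (hfv.mem_cl_iff hn).mpr
    ((kleinLift_kleinMap_mem_cone_iff (hfv.coord_zero_pos hn hx hx_ne)).mpr hx)

/-- The extreme rays of the cone, scaled to have time coordinate `1`. -/
def rays : Finset (MinkowskiSpace n) := hfv.1.toFinset.map ⟨kleinLift, kleinLift_injective⟩

theorem mem_rays : x ∈ hfv.rays ↔ ∃ y ∈ P.verts, kleinLift y = x := by
  simp [rays]

theorem exists_eq_sum_rays (hn : 2 ≤ n) (hx : x ∈ P.cone) :
    ∃ a : MinkowskiSpace n → ℝ, (∀ v, 0 ≤ a v) ∧ x = ∑ v ∈ hfv.rays, a v • v := by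
  rcases eq_or_ne x 0 with rfl | hx_ne
  · exact ⟨0, fun _ => le_rfl, by simp⟩
  have hx₀ := hfv.coord_zero_pos hn hx hx_ne
  have hmem := hfv.kleinMap_mem_cl hn hx hx_ne
  rw [hfv.2, ← hfv.1.coe_toFinset, Finset.mem_convexHull'] at hmem
  obtain ⟨w, hw_nonneg, hw_sum, hwx⟩ := hmem
  refine ⟨fun v => x 0 * max (w (spatial v)) 0, fun v => by positivity, ?_⟩
  calc x = x 0 • kleinLift (kleinMap x) := (smul_kleinLift_kleinMap hx₀.ne').symm
    _ = ∑ y ∈ hfv.1.toFinset, x 0 • w y • kleinLift y := by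
      rw [← hwx, kleinLift_sum hw_sum, Finset.smul_sum]
    _ = ∑ v ∈ hfv.rays, (x 0 * max (w (spatial v)) 0) • v := by
      rw [rays, Finset.sum_map]
      refine Finset.sum_congr rfl fun y hy => ?_
      simp only [Function.Embedding.coeFn_mk, spatial_kleinLift, max_eq_left (hw_nonneg y hy),
        smul_smul]

theorem eq_smul_of_add_eq_kleinLift (hn : 2 ≤ n) {v : EuclideanSpace ℝ (Fin n)}
    (hv : v ∈ P.verts) (hx : x ∈ P.cone) (hy : y ∈ P.cone) (hxy : x + y = kleinLift v) :
    x = x 0 • kleinLift v := by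
  rcases eq_or_ne x 0 with rfl | hx_ne
  · simp
  rcases eq_or_ne y 0 with rfl | hy_ne
  · rw [← hxy, add_zero, show x 0 = 1 by simpa using congrFun hxy 0, one_smul]
  have hx₀ := hfv.coord_zero_pos hn hx hx_ne
  have hy₀ := hfv.coord_zero_pos hn hy hy_ne
  have hseg : v ∈ openSegment ℝ (kleinMap x) (kleinMap y) := by
    refine ⟨x 0, y 0, hx₀, hy₀, congrFun hxy 0, ?_⟩
    rw [smul_kleinMap hx₀.ne', smul_kleinMap hy₀.ne', ← map_add, hxy, spatial_kleinLift]
  rw [← (P.verts_subset_extremePoints hv).2 (hfv.kleinMap_mem_cl hn hx hx_ne)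
    (hfv.kleinMap_mem_cl hn hy hy_ne) hseg, smul_kleinLift_kleinMap hx₀.ne']

theorem exists_eq_smul_of_add_sub_mem_cone (hn : 2 ≤ n) {v : MinkowskiSpace n}
    (hv : v ∈ hfv.rays) (hadd : v + x ∈ P.cone) (hsub : v - x ∈ P.cone) :
    ∃ c : ℝ, x = c • v := by
  obtain ⟨y, hy, rfl⟩ := hfv.mem_rays.mp hv
  have h := hfv.eq_smul_of_add_eq_kleinLift hn hy
    (smul_mem_cone hadd (c := 2⁻¹) (by positivity)) (smul_mem_cone hsub (c := 2⁻¹) (by positivity))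
    (by module)
  rw [Pi.smul_apply, smul_assoc, (smul_right_injective _ (by norm_num : (2⁻¹ : ℝ) ≠ 0)).eq_iff] at h
  exact ⟨(kleinLift y + x) 0 - 1, by rw [sub_smul, ← h, one_smul, add_sub_cancel_left]⟩

end FiniteVolume

end HypPolyhedron

/-! ### Facets and ridges as linear sections of the cone -/

theorem exists_mink_eq_zero_and_mink_eq_zero {n : ℕ} {e e' p : MinkowskiSpace n}
    (he : mink e e = 1) (he' : mink e' e' = 1) (hlt : -1 < mink e e') (hle : mink e e' ≤ 0)
    (hp : mink e p < 0) (hp' : mink e' p < 0) :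
    ∃ w, mink e w = 0 ∧ mink e' w = 0 ∧
      ∀ f, mink f e ≤ 0 → mink f e' ≤ 0 → mink f p < 0 → mink f w < 0 := by
  set g := mink e e' with hg
  have hg' : mink e' e = g := mink_comm e' e
  set a := mink e p - g * mink e' p
  set b := mink e' p - g * mink e p
  have ha : a < 0 := by nlinarith
  have hb : b < 0 := by nlinarith
  have hdet : 0 < 1 - g ^ 2 := by nlinarith
  -- Up to the factor `1 - g ^ 2` this is the orthogonal projection of `p`.
  refine ⟨(1 - g ^ 2) • p - a • e - b • e', ?_, ?_, fun f hfe hfe' hfp => ?_⟩ <;>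
    simp only [mink_sub_right, mink_smul_right]
  · rw [he, ← hg]
    ring
  · rw [he', hg']
    ring
  · linarith [mul_neg_of_pos_of_neg hdet hfp, mul_nonneg_of_nonpos_of_nonpos ha.le hfe,
      mul_nonneg_of_nonpos_of_nonpos hb.le hfe']

namespace HypPolyhedron

open Module LinearMap

variable {n : ℕ} (P : HypPolyhedron n)

/-- The section of `P̄` by the projective subspace given by `W`. -/
def slice (W : Submodule ℝ (MinkowskiSpace n)) : Set (EuclideanSpace ℝ (Fin n)) :=
  {y ∈ P.cl | kleinLift y ∈ W}

/-- `z` lies in the algebraic relative interior of the section of the cone by `W`. -/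
def IsRelInterior (W : Submodule ℝ (MinkowskiSpace n)) (z : MinkowskiSpace n) : Prop :=
  z ∈ W ∧ ∀ u ∈ W, ∃ t : ℝ, 0 < t ∧ z + t • u ∈ P.cone

variable {P} {W : Submodule ℝ (MinkowskiSpace n)} {w z : MinkowskiSpace n} {i k : Fin P.m}
  {I : Finset (Fin P.m)}

theorem IsRelInterior.mem_cone (hz : P.IsRelInterior W z) : z ∈ P.cone := by
  obtain ⟨t, -, ht⟩ := hz.2 0 W.zero_mem
  rwa [smul_zero, add_zero] at ht

variable (P) in
theorem slice_inf (W W' : Submodule ℝ (MinkowskiSpace n)) :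
    P.slice (W ⊓ W') = P.slice W ∩ P.slice W' :=
  Set.inter_inter_distrib_left P.cl {y | kleinLift y ∈ W} {y | kleinLift y ∈ W'}

variable (P) in
theorem isExposed_slice_ker (i : Fin P.m) :
    IsExposed ℝ P.cl (P.slice (ker (minkForm n (P.e i)))) := by
  rintro ⟨y₀, hy₀, hy₀i⟩
  have hmax : ∀ y, innerSL ℝ (spatial (P.e i)) y = mink (P.e i) (kleinLift y) + P.e i 0 := by
    intro y
    rw [mink_kleinLift, innerSL_apply_apply, sub_add_cancel]
  refine ⟨innerSL ℝ (spatial (P.e i)), ?_⟩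
  ext y
  simp only [hmax, add_le_add_iff_right]
  refine and_congr_right fun hy => ⟨fun hyi w hw => ?_, fun hyi => ?_⟩
  · exact (kleinLift_mem_cone hw i).trans (Eq.ge hyi)
  · exact (kleinLift_mem_cone hy i).antisymm ((Eq.ge hy₀i).trans (hyi y₀ hy₀))

variable (P) in
theorem finrank_ker_minkForm (i : Fin P.m) : finrank ℝ (ker (minkForm n (P.e i))) = n := by
  have hne : minkForm n (P.e i) ≠ 0 := fun h =>
    one_ne_zero ((P.unit i).symm.trans (LinearMap.congr_fun h (P.e i)))
  have h := Module.Dual.finrank_ker_add_one_of_ne_zero hne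
  rw [finrank_fin_fun] at h
  exact Nat.succ_injective h

theorem faceInHyperplane_of_subset {F : Set (EuclideanSpace ℝ (Fin n))}
    (hF : F ⊆ P.slice (ker (minkForm n (P.e i)))) : P.faceInHyperplane (P.e i) F :=
  fun _ hx hxF => (kleinLift_kleinMap_mem_iff hx.1.2.ne').mp (hF hxF).2

namespace FiniteVolume

variable (hfv : P.FiniteVolume)

include hfv

theorem ne_zero_of_isRelInterior (hn : 2 ≤ n) (hW : W ≠ ⊥) (hz : P.IsRelInterior W z) :
    z ≠ 0 := by
  rintro rfl
  have hpos : ∀ u ∈ W, u ≠ 0 → 0 < u 0 := fun u hu hu₀ => by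
    obtain ⟨t, ht, htu⟩ := hz.2 u hu
    rw [zero_add, smul_mem_cone_iff ht] at htu
    exact hfv.coord_zero_pos hn htu hu₀
  obtain ⟨u, hu, hu₀⟩ := Submodule.exists_mem_ne_zero_of_ne_bot hW
  have hneg := hpos (-u) (W.neg_mem hu) (neg_ne_zero.mpr hu₀)
  exact (neg_pos.mp hneg).not_gt (hpos u hu hu₀)

theorem kleinMap_mem_slice_iff (hn : 2 ≤ n) (hz : z ∈ P.cone) (hz₀ : z ≠ 0) :
    kleinMap z ∈ P.slice W ↔ z ∈ W :=
  (and_iff_right (hfv.kleinMap_mem_cl hn hz hz₀)).trans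
    (kleinLift_kleinMap_mem_iff (hfv.coord_zero_pos hn hz hz₀).ne')

theorem vectorSpan_slice (hn : 2 ≤ n) (hz : P.IsRelInterior W z) (hz₀ : z ≠ 0) :
    vectorSpan ℝ (P.slice W) = W.comap horizontal := by
  refine le_antisymm (Submodule.span_le.mpr ?_) fun d hd => ?_
  · rintro _ ⟨y, hy, y', hy', rfl⟩
    change horizontal (y - y') ∈ W
    rw [horizontal_sub]
    exact W.sub_mem hy.2 hy'.2
  · obtain ⟨t, ht, hx⟩ := hz.2 _ hd
    set x := z + t • horizontal d with hx_def
    have hzpos := hfv.coord_zero_pos hn hz.mem_cone hz₀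
    have hx_zero : x 0 = z 0 := by simp [hx_def]
    have hx₀ : x ≠ 0 := fun h => hzpos.ne' (hx_zero.symm.trans (congrFun h 0))
    have hmem := vsub_mem_vectorSpan ℝ
      ((hfv.kleinMap_mem_slice_iff hn hx hx₀).mpr (W.add_mem hz.1 (W.smul_mem t hd)))
      ((hfv.kleinMap_mem_slice_iff hn hz.mem_cone hz₀).mpr hz.1)
    have hd_eq : z 0 • (kleinMap x -ᵥ kleinMap z) = t • d := by
      rw [vsub_eq_sub, smul_sub, smul_kleinMap hzpos.ne', ← hx_zero,
        smul_kleinMap (hx_zero ▸ hzpos.ne'), hx_def, map_add, add_sub_cancel_left, map_smul,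
        spatial_horizontal]
    exact (Submodule.smul_mem_iff _ ht.ne').mp (hd_eq ▸ Submodule.smul_mem _ _ hmem)

theorem nonempty_slice_and_sdim (hn : 2 ≤ n) (hW : W ≠ ⊥) (hz : P.IsRelInterior W z) :
    (P.slice W).Nonempty ∧ sdim (P.slice W) + 1 = finrank ℝ W := by
  have hz₀ := hfv.ne_zero_of_isRelInterior hn hW hz
  refine ⟨⟨_, (hfv.kleinMap_mem_slice_iff hn hz.mem_cone hz₀).mpr hz.1⟩, ?_⟩
  rw [sdim, hfv.vectorSpan_slice hn hz hz₀]
  exact finrank_comap_horizontal_add_one hz.1 (hfv.coord_zero_pos hn hz.mem_cone hz₀).ne'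

theorem slice_mem_faces (hn : 2 ≤ n) {r : ℕ} (hexp : IsExposed ℝ P.cl (P.slice W))
    (hr : finrank ℝ W = r + 1) (hz : P.IsRelInterior W z) : P.slice W ∈ P.faces r := by
  have hW : W ≠ ⊥ := Submodule.one_le_finrank_iff.mp (by omega)
  obtain ⟨hne, hdim⟩ := hfv.nonempty_slice_and_sdim hn hW hz
  exact ⟨hexp, hne, Nat.succ_injective (hdim.trans hr)⟩

end FiniteVolume

/-! ### Irredundant families of half-spaces -/

variable (P) in
/-- The half-spaces indexed by `I` form a minimal family cutting out the polyhedron. -/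
def IsIrredundant (I : Finset (Fin P.m)) : Prop :=
  IsIrredundantSubsystem (fun i => minkForm n (P.e i)) ⊤ Finset.univ I

variable (P) in
theorem exists_isIrredundant : ∃ I, P.IsIrredundant I :=
  exists_isIrredundantSubsystem Submodule.mem_top fun i _ => P.mink_center_neg i

namespace IsIrredundant

variable (hI : P.IsIrredundant I)

include hI

theorem mem_cone (hz : ∀ i ∈ I, mink (P.e i) z ≤ 0) : z ∈ P.cone := fun i =>
  hI.forall_nonpos z Submodule.mem_top hz i (Finset.mem_univ i)

theorem exists_tightOnlyAt (hi : i ∈ I) :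
    ∃ z, TightOnlyAt (fun i => minkForm n (P.e i)) I i z := by
  obtain ⟨z, -, hz⟩ := IsIrredundantSubsystem.exists_tightOnlyAt hI i hi
  exact ⟨z, hz⟩

theorem isRelInterior_facet (hz : TightOnlyAt (fun i => minkForm n (P.e i)) I i z) :
    P.IsRelInterior (ker (minkForm n (P.e i))) z :=
  ⟨hz.1, fun _ hu => (hz.exists_add_smul_nonpos hu).imp fun _ ht => ⟨ht.1, hI.mem_cone ht.2⟩⟩

theorem slice_mem_faces (hfv : P.FiniteVolume) (hn : 2 ≤ n) (hi : i ∈ I) :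
    P.slice (ker (minkForm n (P.e i))) ∈ P.faces (n - 1) := by
  obtain ⟨z, hz⟩ := hI.exists_tightOnlyAt hi
  refine hfv.slice_mem_faces hn (P.isExposed_slice_ker i) ?_ (hI.isRelInterior_facet hz)
  rw [P.finrank_ker_minkForm]
  omega

theorem injOn_slice (hfv : P.FiniteVolume) (hn : 2 ≤ n) :
    Set.InjOn (fun i => P.slice (ker (minkForm n (P.e i)))) I := by
  intro i hi j hj hij
  by_contra hne
  obtain ⟨z, hz⟩ := hI.exists_tightOnlyAt hi
  have hjz : mink (P.e j) z < 0 := hz.2 j hj (Ne.symm hne)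
  have hz₀ : z ≠ 0 := by
    rintro rfl
    rw [mink_comm, mink_zero_left] at hjz
    exact hjz.false
  have hmem {k} := hfv.kleinMap_mem_slice_iff (W := ker (minkForm n (P.e k))) hn
    (hI.mem_cone hz.nonpos) hz₀
  exact hjz.ne (hmem.mp (Set.ext_iff.mp hij _ |>.mp (hmem.mpr hz.1)))

theorem card_le (hfv : P.FiniteVolume) (hn : 2 ≤ n) : I.card ≤ P.a (n - 1) := by
  rw [a, ← Set.ncard_coe_finset, ← (hI.injOn_slice hfv hn).ncard_image]
  refine Set.ncard_le_ncard ?_ (hfv.finite_faces _)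
  rintro _ ⟨i, hi, rfl⟩
  exact hI.slice_mem_faces hfv hn hi

theorem finrank_ridge_add_one (hi : i ∈ I) (hk : k ∈ I) (hik : i ≠ k) :
    finrank ℝ ↥(ker (minkForm n (P.e i)) ⊓ ker (minkForm n (P.e k))) + 1 = n := by
  obtain ⟨z, hz⟩ := hI.exists_tightOnlyAt hi
  rw [finrank_inf_ker_add_one hz.1 (hz.2 k hk hik.symm).ne, P.finrank_ker_minkForm]

theorem mink_eq_zero_of_isRelInterior (hra : P.IsRightAngled) (hfv : P.FiniteVolume) (hn : 2 ≤ n)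
    (hi : i ∈ I) (hk : k ∈ I) (hik : i ≠ k)
    (hw : P.IsRelInterior (ker (minkForm n (P.e i)) ⊓ ker (minkForm n (P.e k))) w) :
    mink (P.e i) (P.e k) = 0 := by
  have hexp := (P.isExposed_slice_ker i).inter (P.isExposed_slice_ker k)
  rw [← slice_inf] at hexp
  have hr := hI.finrank_ridge_add_one hi hk hik
  refine hra i k hik ⟨_, hfv.slice_mem_faces hn hexp (by omega) hw, ?_, ?_⟩
  · exact faceInHyperplane_of_subset fun y hy => ⟨hy.1, hy.2.1⟩
  · exact faceInHyperplane_of_subset fun y hy => ⟨hy.1, hy.2.2⟩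

/-- The facet `i` is itself a polyhedron, cut out by an irredundant `J ⊆ I.erase i`. -/
theorem isRelInterior_ridge {J : Finset (Fin P.m)}
    (hJ : IsIrredundantSubsystem (fun j => minkForm n (P.e j)) (ker (minkForm n (P.e i)))
      (I.erase i) J)
    (hwi : mink (P.e i) w = 0) (hw : TightOnlyAt (fun j => minkForm n (P.e j)) J k w) :
    P.IsRelInterior (ker (minkForm n (P.e i)) ⊓ ker (minkForm n (P.e k))) w := by
  refine ⟨⟨hwi, hw.1⟩, fun u hu => ?_⟩
  obtain ⟨t, ht, htJ⟩ := hw.exists_add_smul_nonpos hu.2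
  have hti : w + t • u ∈ ker (minkForm n (P.e i)) :=
    Submodule.add_mem _ hwi (Submodule.smul_mem _ t hu.1)
  refine ⟨t, ht, hI.mem_cone fun j hj => ?_⟩
  rcases eq_or_ne j i with rfl | hji
  · exact Eq.le hti
  · exact hJ.forall_nonpos _ hti htJ j (Finset.mem_erase.mpr ⟨hji, hj⟩)

theorem mink_nonpos (hra : P.IsRightAngled) (hfv : P.FiniteVolume) (hn : 2 ≤ n) (hi : i ∈ I)
    (hk : k ∈ I) (hik : i ≠ k) : mink (P.e i) (P.e k) ≤ 0 := by
  obtain ⟨p, hp⟩ := hI.exists_tightOnlyAt hi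
  obtain ⟨z, hz⟩ := hI.exists_tightOnlyAt hk
  obtain ⟨J, hJ⟩ := exists_isIrredundantSubsystem (s := I.erase i)
    (W := ker (minkForm n (P.e i))) hp.1
    fun j hj => hp.2 j (Finset.mem_of_mem_erase hj) (Finset.ne_of_mem_erase hj)
  have hortho : ∀ j ∈ J, mink (P.e i) (P.e j) = 0 := fun j hj => by
    obtain ⟨w, hwi, hw⟩ := hJ.exists_tightOnlyAt j hj
    obtain ⟨hji, hjI⟩ := Finset.mem_erase.mp (hJ.subset hj)
    exact hI.mink_eq_zero_of_isRelInterior hra hfv hn hi hjI hji.symm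
      (hI.isRelInterior_ridge hJ hwi hw)
  -- The projection of `z` to the facet `i` satisfies the inequalities of `J`, hence that of `k`.
  have hproj : ∀ j, mink (P.e j) (z - mink (P.e i) z • P.e i) =
      mink (P.e j) z - mink (P.e i) z * mink (P.e i) (P.e j) := fun j => by
    rw [mink_sub_right, mink_smul_right, mink_comm (P.e j) (P.e i)]
  have hprojk : mink (P.e k) (z - mink (P.e i) z • P.e i) ≤ 0 := by
    refine hJ.forall_nonpos _ ?_ (fun j hj => ?_) k (Finset.mem_erase.mpr ⟨hik.symm, hk⟩)
    · exact (hproj i).trans (by rw [P.unit, mul_one, sub_self])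
    · refine (hproj j).trans_le ?_
      rw [hortho j hj, mul_zero, sub_zero]
      exact hz.nonpos j (Finset.mem_of_mem_erase (hJ.subset hj))
  have hkz : mink (P.e k) z = 0 := hz.1
  have hiz : mink (P.e i) z < 0 := hz.2 i hi hik
  rw [hproj, hkz] at hprojk
  nlinarith

theorem mink_eq_zero_or_le (hra : P.IsRightAngled) (hfv : P.FiniteVolume) (hn : 2 ≤ n)
    (hi : i ∈ I) (hk : k ∈ I) (hik : i ≠ k) :
    mink (P.e i) (P.e k) = 0 ∨ mink (P.e i) (P.e k) ≤ -1 := by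
  refine or_iff_not_imp_right.mpr fun hlt => ?_
  have hle {j l} := hI.mink_nonpos (i := j) (k := l) hra hfv hn
  obtain ⟨w, hwi, hwk, hw⟩ := exists_mink_eq_zero_and_mink_eq_zero (P.unit i) (P.unit k)
    (not_le.mp hlt) (hle hi hk hik) (P.mink_center_neg i) (P.mink_center_neg k)
  have htight : ∀ j ∈ I, mink (P.e j) w < 0 ∨ j = i ∨ j = k := fun j hj =>
    or_iff_not_imp_right.mpr fun h => by
      push Not at h
      exact hw _ (hle hj hi h.1) (hle hj hk h.2) (P.mink_center_neg j)
  refine hI.mink_eq_zero_of_isRelInterior hra hfv hn hi hk hik ⟨⟨hwi, hwk⟩, fun u hu => ?_⟩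
  have hsmall := eventually_forall_apply_add_smul_nonpos (f := fun j => minkForm n (P.e j))
    (s := I) (x := w) (u := u) (fun j hj => ?_) fun j hj hjw => ?_
  · obtain ⟨t, ht, htI⟩ := (eventually_mem_nhdsWithin.and hsmall).exists
    exact ⟨t, ht, hI.mem_cone htI⟩
  · rcases htight j hj with h | rfl | rfl
    exacts [h.le, hwi.le, hwk.le]
  · rcases htight j hj with h | rfl | rfl
    exacts [absurd hjw h.ne, Eq.le hu.1, Eq.le hu.2]

/-- The right-angled system of a polyhedron of finite volume, whose facets are indexed by an
irredundant family of half-spaces. -/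
def rightAngledSystem (hra : P.IsRightAngled) (hfv : P.FiniteVolume) (hn : 2 ≤ n) :
    RightAngledSystem n I :=
  have hcone {x} (hx : ∀ i : I, mink (P.e i) x ≤ 0) : x ∈ P.cone :=
    hI.mem_cone fun i hi => hx ⟨i, hi⟩
  { normal i := P.e i
    vertices := hfv.rays
    center := P.center
    mink_normal_self i := P.unit i
    mink_normal i j hij :=
      hI.mink_eq_zero_or_le hra hfv hn i.2 j.2 (Subtype.coe_injective.ne hij)
    mink_center_neg i := P.mink_center_neg i
    center_timelike := P.center_timelike
    causal _ hx hx₀ :=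
      have hpos := hfv.coord_zero_pos hn (hcone hx) hx₀
      ⟨hpos, hfv.mink_self_nonpos hn (hcone hx) hpos.le⟩
    vertex_zero v hv := by
      obtain ⟨y, -, rfl⟩ := hfv.mem_rays.mp hv
      exact kleinLift_zero y
    mink_vertex_nonpos v hv i := by
      obtain ⟨y, hy, rfl⟩ := hfv.mem_rays.mp hv
      exact kleinLift_mem_cone (P.verts_subset_cl hy) i
    exists_eq_sum _ hx := hfv.exists_eq_sum_rays hn (hcone hx)
    extreme _ hv _ hadd hsub :=
      hfv.exists_eq_smul_of_add_sub_mem_cone hn hv (hcone hadd) (hcone hsub) }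

end IsIrredundant

end HypPolyhedron

/-- Every `6`-dimensional finite-volume right-angled convex hyperbolic polyhedron has at
least `27` facets. -/
theorem facets_of_6_polyhedron (P : HypPolyhedron 6) (hfv : P.FiniteVolume)
    (hra : P.IsRightAngled) :
    27 ≤ P.a 5 := by
  obtain ⟨I, hI⟩ := P.exists_isIrredundant
  have hn : 2 ≤ 6 := by norm_num
  calc 27 ≤ Fintype.card I := (hI.rightAngledSystem hra hfv hn).twentySeven_le_card
    _ = I.card := Fintype.card_coe I
    _ ≤ P.a 5 := hI.card_le hfv hn
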